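/- For every arrangement domain Δ ∈ 𝒟⁺, each function λ ↦ I_{Δ,X}(λ) is holomorphic on the half-plane {Re λ > 0}, and the vector I_Δ(λ) = (I_{Δ,X}(λ))_{X∈𝒳} satisfies the linear ordinary differential equation I_Δ'(λ) = −(𝒜 + λ^{−1} ℬ) I_Δ(λ), where the matrices 𝒜 and ℬ, indexed by pairs of vertices, are given by: 𝒜 is diagonal with 𝒜_{X,X} = f_0(X); ℬ_{X,X} = α_X; ℬ_{X,Y} = 0 whenever X ≠ Y and the index sets of X and Y share fewer than k−1 elements; and ℬ_{X,Y} = sgn(l_j(e_U) · l_r(e_U)) · α_r whenever U = X∩Y has exactly k−1 elements, {j} = X∖Y and {r} = Y∖X. -/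

import Mathlib

open Set MeasureTheory Filter
open scoped Classical Real

noncomputable section

namespace HypArr

variable {k N : ℕ}

/-- The hyperplane `H j = f j ⁻¹ (0)` of the `j`-th affine form. -/
def Hyp (f : Fin N → ((Fin k → ℝ) →ᵃ[ℝ] ℝ)) (j : Fin N) : Set (Fin k → ℝ) :=
  {x | f j x = 0}

/-- The complement `ℝ^k ∖ (H 1 ∪ ⋯ ∪ H N)` of the union of all the hyperplanes. -/
def HypCompl (f : Fin N → ((Fin k → ℝ) →ᵃ[ℝ] ℝ)) : Set (Fin k → ℝ) :=
  {x | ∀ j, f j x ≠ 0}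

/-- `Δ` is an arrangement domain: a connected component of `ℝ^k ∖ (H 1 ∪ ⋯ ∪ H N)`. -/
def IsDomain (f : Fin N → ((Fin k → ℝ) →ᵃ[ℝ] ℝ)) (Δ : Set (Fin k → ℝ)) : Prop :=
  ∃ x ∈ HypCompl f, Δ = connectedComponentIn (HypCompl f) x

/-- The hyperplanes `H 1, …, H N` are in generic position in `ℝ^k`: they are pairwise
distinct, any `k` of them intersect in exactly one point, and any `k+1` of them have
empty intersection. -/
def Generic (f : Fin N → ((Fin k → ℝ) →ᵃ[ℝ] ℝ)) : Prop :=
  (∀ i j : Fin N, i ≠ j → Hyp f i ≠ Hyp f j) ∧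
  (∀ S : Finset (Fin N), S.card = k → ∃! x : Fin k → ℝ, ∀ j ∈ S, f j x = 0) ∧
  (∀ S : Finset (Fin N), S.card = k + 1 → ¬ ∃ x : Fin k → ℝ, ∀ j ∈ S, f j x = 0)

/-- `X` is a vertex of the arrangement. -/
def IsVertex (f : Fin N → ((Fin k → ℝ) →ᵃ[ℝ] ℝ)) (X : Fin k → ℝ) : Prop :=
  ∃ S : Finset (Fin N), S.card = k ∧ ∀ j ∈ S, f j X = 0

/-- `X` is the vertex of the arrangement with index set `S`. -/
def IsVertexOf (f : Fin N → ((Fin k → ℝ) →ᵃ[ℝ] ℝ)) (S : Finset (Fin N))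
    (X : Fin k → ℝ) : Prop :=
  S.card = k ∧ ∀ j ∈ S, f j X = 0

/-- The linear form `f0` is in general position with respect to the arrangement:
it takes pairwise distinct values at the vertices and is nonconstant on each
line `L_U = ∩_{j ∈ U} H j` for `U` of cardinality `k - 1`. -/
def GenericLin (f : Fin N → ((Fin k → ℝ) →ᵃ[ℝ] ℝ)) (f0 : (Fin k → ℝ) →ₗ[ℝ] ℝ) : Prop :=
  (∀ X Y : Fin k → ℝ, IsVertex f X → IsVertex f Y → X ≠ Y → f0 X ≠ f0 Y) ∧
  ∀ U : Finset (Fin N), U.card = k - 1 →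
    ∃ x y : Fin k → ℝ, (∀ j ∈ U, f j x = 0) ∧ (∀ j ∈ U, f j y = 0) ∧ f0 x ≠ f0 y

/-- `C` is a connected component of `ℝ^k ∖ ⋃_{j ∈ S} H j`. -/
def IsConeComp (f : Fin N → ((Fin k → ℝ) →ᵃ[ℝ] ℝ)) (S : Finset (Fin N))
    (C : Set (Fin k → ℝ)) : Prop :=
  ∃ y, (∀ j ∈ S, f j y ≠ 0) ∧ C = connectedComponentIn {z | ∀ j ∈ S, f j z ≠ 0} y

/-- `C` is the cone `C⁺_X` of the vertex `X` with index set `S`: the unique connected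
component of `ℝ^k ∖ ⋃_{j ∈ S} H j` on which `f0 - f0 X` is everywhere positive. -/
def IsPosCone (f : Fin N → ((Fin k → ℝ) →ᵃ[ℝ] ℝ)) (f0 : (Fin k → ℝ) →ₗ[ℝ] ℝ)
    (S : Finset (Fin N)) (X : Fin k → ℝ) (C : Set (Fin k → ℝ)) : Prop :=
  IsConeComp f S C ∧ ∀ y ∈ C, f0 X < f0 y

/-- `C` is the cone `C⁻_X` of the vertex `X` with index set `S`: the unique connected
component of `ℝ^k ∖ ⋃_{j ∈ S} H j` on which `f0 - f0 X` is everywhere negative. -/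
def IsNegCone (f : Fin N → ((Fin k → ℝ) →ᵃ[ℝ] ℝ)) (f0 : (Fin k → ℝ) →ₗ[ℝ] ℝ)
    (S : Finset (Fin N)) (X : Fin k → ℝ) (C : Set (Fin k → ℝ)) : Prop :=
  IsConeComp f S C ∧ ∀ y ∈ C, f0 y < f0 X

/-- `Δ` is the domain `Δ_X` of the vertex `X`: the unique arrangement domain whose
closure contains `X` and on which `f0 - f0 X > 0`. -/
def IsDomOf (f : Fin N → ((Fin k → ℝ) →ᵃ[ℝ] ℝ)) (f0 : (Fin k → ℝ) →ₗ[ℝ] ℝ)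
    (X : Fin k → ℝ) (Δ : Set (Fin k → ℝ)) : Prop :=
  IsDomain f Δ ∧ X ∈ closure Δ ∧ ∀ y ∈ Δ, f0 X < f0 y

/-- `Δ` is the domain `Δ⁻_X` of the vertex `X`: the unique arrangement domain whose
closure contains `X` and on which `f0 - f0 X < 0`. -/
def IsNegDomOf (f : Fin N → ((Fin k → ℝ) →ᵃ[ℝ] ℝ)) (f0 : (Fin k → ℝ) →ₗ[ℝ] ℝ)
    (X : Fin k → ℝ) (Δ : Set (Fin k → ℝ)) : Prop :=
  IsDomain f Δ ∧ X ∈ closure Δ ∧ ∀ y ∈ Δ, f0 y < f0 X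

/-- `Δ` belongs to `𝒟⁺`: it is an arrangement domain on which `f0` is bounded
from below. -/
def MemDplus (f : Fin N → ((Fin k → ℝ) →ᵃ[ℝ] ℝ)) (f0 : (Fin k → ℝ) →ₗ[ℝ] ℝ)
    (Δ : Set (Fin k → ℝ)) : Prop :=
  IsDomain f Δ ∧ BddBelow (f0 '' Δ)

/-- `Δ` belongs to `𝒟⁻`: it is an arrangement domain on which `f0` is bounded
from above. -/
def MemDminus (f : Fin N → ((Fin k → ℝ) →ᵃ[ℝ] ℝ)) (f0 : (Fin k → ℝ) →ₗ[ℝ] ℝ)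
    (Δ : Set (Fin k → ℝ)) : Prop :=
  IsDomain f Δ ∧ BddAbove (f0 '' Δ)

/-- The set `W` (a hyperplane) separates `S` from `T`: they lie in different connected
components of the complement of `W`. -/
def Separates {α : Type*} [TopologicalSpace α] (W S T : Set α) : Prop :=
  ∃ x ∈ S, ∃ y ∈ T, S ⊆ connectedComponentIn Wᶜ x ∧ T ⊆ connectedComponentIn Wᶜ y ∧
    connectedComponentIn Wᶜ x ≠ connectedComponentIn Wᶜ y

/-- The index set of `ℋ(Δ, Δ')`, the set of hyperplanes separating `Δ` from `Δ'`. -/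
def SepSet (f : Fin N → ((Fin k → ℝ) →ᵃ[ℝ] ℝ)) (Δ Δ' : Set (Fin k → ℝ)) :
    Finset (Fin N) :=
  Finset.univ.filter fun j => Separates (Hyp f j) Δ Δ'

theorem aff_add (g : (Fin k → ℝ) →ᵃ[ℝ] ℝ) (x v : Fin k → ℝ) :
    g (x + v) = g x + g.linear v := by
  have := g.map_vadd x v
  simp only [vadd_eq_add] at this
  rw [add_comm x v, this, add_comm]

theorem aff_zero (g : (Fin k → ℝ) →ᵃ[ℝ] ℝ) (x : Fin k → ℝ) :
    g x = g.linear x + g 0 := by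
  have := aff_add g 0 x
  rw [zero_add] at this
  rw [this, add_comm]

theorem lin_inj {f : Fin N → ((Fin k → ℝ) →ᵃ[ℝ] ℝ)} (hf : Generic f)
    {S : Finset (Fin N)} (hS : S.card = k) {z : Fin k → ℝ}
    (hz : ∀ j ∈ S, (f j).linear z = 0) : z = 0 := by
  obtain ⟨X, hX, hu⟩ := hf.2.1 S hS
  have := hu (X + z) (fun j hj => by rw [aff_add, hX j hj, hz j hj, add_zero])
  simpa using this

/-- the open sign region of `x0` -/
def Reg (f : Fin N → ((Fin k → ℝ) →ᵃ[ℝ] ℝ)) (x0 : Fin k → ℝ) : Set (Fin k → ℝ) :=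
  {x | ∀ j, 0 < f j x0 * f j x}

theorem aff_cont (g : (Fin k → ℝ) →ᵃ[ℝ] ℝ) : Continuous g :=
  AffineMap.continuous_of_finiteDimensional g

theorem lin_cont (g : (Fin k → ℝ) →ₗ[ℝ] ℝ) : Continuous g :=
  LinearMap.continuous_of_finiteDimensional g

theorem Reg_open (f : Fin N → ((Fin k → ℝ) →ᵃ[ℝ] ℝ)) (x0 : Fin k → ℝ) :
    IsOpen (Reg f x0) := by
  have : Reg f x0 = ⋂ j, {x | 0 < f j x0 * f j x} := by ext; simp [Reg]
  rw [this]
  exact isOpen_iInter_of_finite fun j =>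
    isOpen_lt continuous_const (continuous_const.mul (aff_cont _))

theorem Reg_convex (f : Fin N → ((Fin k → ℝ) →ᵃ[ℝ] ℝ)) (x0 : Fin k → ℝ) :
    Convex ℝ (Reg f x0) := by
  intro x hx y hy a b ha hb hab j
  have e : f j (a • x + b • y) = a * f j x + b * f j y := by
    rw [aff_zero (f j) (a • x + b • y), aff_zero (f j) x, aff_zero (f j) y, map_add, map_smul,
      map_smul, smul_eq_mul, smul_eq_mul]
    linear_combination -(f j 0) * hab
  rw [e]
  have h1 := hx j
  have h2 := hy j
  rcases eq_or_lt_of_le ha with h | h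
  · have : b = 1 := by linarith
    subst h; subst this; simpa using h2
  · nlinarith [mul_pos h h1, mul_nonneg hb h2.le]

theorem domain_eq {f : Fin N → ((Fin k → ℝ) →ᵃ[ℝ] ℝ)} {Δ : Set (Fin k → ℝ)}
    (h : IsDomain f Δ) : ∃ x0 ∈ HypCompl f, Δ = Reg f x0 := by
  obtain ⟨x0, hx0, rfl⟩ := h
  refine ⟨x0, hx0, ?_⟩
  apply Subset.antisymm
  · intro x hx j
    have hpc : IsPreconnected (connectedComponentIn (HypCompl f) x0) :=
      isPreconnected_connectedComponentIn
    have him := hpc.image (fun x => f j x0 * f j x)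
      (continuous_const.mul (aff_cont _)).continuousOn
    have hoc := him.ordConnected
    by_contra hneg
    have m0 : f j x0 * f j x0 ∈ (fun x => f j x0 * f j x) '' (connectedComponentIn (HypCompl f) x0) :=
      ⟨x0, mem_connectedComponentIn hx0, rfl⟩
    have m1 : f j x0 * f j x ∈ (fun x => f j x0 * f j x) '' (connectedComponentIn (HypCompl f) x0) :=
      ⟨x, hx, rfl⟩
    obtain ⟨y, hy, hy0⟩ := hoc.out m1 m0 ⟨not_lt.1 hneg, mul_self_nonneg _⟩
    have := connectedComponentIn_subset _ _ hy
    exact mul_ne_zero (hx0 j) (this j) hy0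
  · apply IsPreconnected.subset_connectedComponentIn (Reg_convex f x0).isPreconnected
    · intro j; exact mul_self_pos.2 (hx0 j)
    · intro x hx j h
      have := hx j
      simp [h] at this

theorem rec_pos {f : Fin N → ((Fin k → ℝ) →ᵃ[ℝ] ℝ)} (hk : 1 ≤ k) (hkN : k ≤ N) (hf : Generic f)
    {f0 : (Fin k → ℝ) →ₗ[ℝ] ℝ} (hf0 : GenericLin f f0) (s : Fin N → ℝ) (hs : ∀ j, s j ≠ 0)
    (hK : ∀ z, (∀ j, 0 ≤ s j * (f j).linear z) → 0 ≤ f0 z)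
    {z : Fin k → ℝ} (hz : ∀ j, 0 ≤ s j * (f j).linear z) (hz0 : z ≠ 0) : 0 < f0 z := by
  refine lt_of_le_of_ne (hK z hz) fun h0 => ?_
  set A : Finset (Fin N) := Finset.univ.filter fun j => (f j).linear z = 0 with hA
  have hAk : A.card ≤ k - 1 := by
    by_contra hc
    obtain ⟨S, hSA, hS⟩ := Finset.exists_subset_card_eq (show k ≤ A.card by omega)
    exact hz0 (lin_inj hf hS fun j hj => by simpa [hA] using hSA hj)
  obtain ⟨U, hAU, -, hU⟩ := Finset.exists_subsuperset_card_eq (Finset.subset_univ A) hAk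
    (by simp; omega)
  obtain ⟨x, y, hx, hy, hxy⟩ := hf0.2 U hU
  have key : ∀ w, (∀ j ∈ A, (f j).linear w = 0) → 0 ≤ f0 w := by
    intro w hw
    have ev : ∀ᶠ t : ℝ in nhdsWithin 0 (Ioi 0), ∀ j, 0 ≤ s j * (f j).linear (z + t • w) := by
      rw [eventually_all]
      intro j
      by_cases hj : j ∈ A
      · have h1 : (f j).linear z = 0 := by simpa [hA] using hj
        filter_upwards with t
        simp [h1, hw j hj]
      · have h1 : (f j).linear z ≠ 0 := by simpa [hA] using hj
        have h2 : 0 < s j * (f j).linear z :=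
          lt_of_le_of_ne (hz j) (mul_ne_zero (hs j) h1).symm
        have hc : Continuous fun t : ℝ => s j * (f j).linear (z + t • w) := by
          have := lin_cont (f j).linear
          fun_prop
        have := (hc.tendsto 0).eventually (lt_mem_nhds (a := 0) (by simpa using h2))
        exact (this.filter_mono nhdsWithin_le_nhds).mono fun t ht => le_of_lt ht
    obtain ⟨t, ht, htpos⟩ := (ev.and self_mem_nhdsWithin).exists
    have := hK _ ht
    rw [map_add, ← h0, map_smul, zero_add, smul_eq_mul] at this
    exact nonneg_of_mul_nonneg_right this htpos
  have hd : ∀ j ∈ A, (f j).linear (x - y) = 0 := by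
    intro j hj
    have h1 := hx j (hAU hj)
    have h2 := hy j (hAU hj)
    rw [aff_zero] at h1 h2
    rw [map_sub]; linarith
  have h1 := key _ hd
  have h2 := key (-(x - y)) (fun j hj => by rw [map_neg, hd j hj, neg_zero])
  rw [map_neg] at h2
  rw [map_sub] at h1 h2
  exact hxy (by linarith)

theorem coercive {f : Fin N → ((Fin k → ℝ) →ᵃ[ℝ] ℝ)} (hk : 1 ≤ k) (hkN : k ≤ N) (hf : Generic f)
    {f0 : (Fin k → ℝ) →ₗ[ℝ] ℝ} (hf0 : GenericLin f f0) {x0 : Fin k → ℝ} (hx0 : x0 ∈ HypCompl f)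
    (hb : BddBelow (f0 '' Reg f x0)) :
    ∃ m C : ℝ, 0 < C ∧ ∀ x ∈ Reg f x0, m ≤ f0 x ∧ ‖x‖ ≤ C * (f0 x - m + 1) := by
  obtain ⟨m, hm⟩ := hb
  have hm' : ∀ x ∈ Reg f x0, m ≤ f0 x := fun x hx => hm ⟨x, hx, rfl⟩
  set Q : Set ((Fin k → ℝ) × ℝ) := {p | 0 ≤ p.2 ∧ ∀ j, 0 ≤ f j x0 * ((f j).linear p.1 + p.2 * f j 0)}
    with hQ
  have hQc : IsClosed Q := by
    have : Q = {p | 0 ≤ p.2} ∩ ⋂ j, {p | 0 ≤ f j x0 * ((f j).linear p.1 + p.2 * f j 0)} := by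
      ext; simp [hQ]
    rw [this]
    refine (isClosed_le continuous_const continuous_snd).inter (isClosed_iInter fun j => ?_)
    have := lin_cont (f j).linear
    exact isClosed_le continuous_const (by fun_prop)
  have hlow : ∀ p ∈ Q, m * p.2 ≤ f0 p.1 := by
    rintro ⟨z, t⟩ ⟨ht, hz⟩
    simp only at ht hz ⊢
    have h : ∀ ε : ℝ, 0 < ε → m * (t + ε) ≤ f0 z + ε * f0 x0 := by
      intro ε hε
      have hte : 0 < t + ε := by linarith
      have hmem : (t + ε)⁻¹ • (z + ε • x0) ∈ Reg f x0 := by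
        intro j
        have e : f j ((t + ε)⁻¹ • (z + ε • x0)) =
            (t + ε)⁻¹ * (((f j).linear z + t * f j 0) + ε * f j x0) := by
          rw [aff_zero (f j) (_ • _), aff_zero (f j) x0, map_smul, map_add, map_smul]
          simp only [smul_eq_mul]
          field_simp
          ring
        rw [e]
        have h1 := hz j
        have h2 : 0 < f j x0 * f j x0 := mul_self_pos.2 (hx0 j)
        have : f j x0 * ((t + ε)⁻¹ * (((f j).linear z + t * f j 0) + ε * f j x0)) =
          (t + ε)⁻¹ * (f j x0 * ((f j).linear z + t * f j 0) + ε * (f j x0 * f j x0)) := by ring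
        rw [this]
        positivity
      have := hm' _ hmem
      rw [map_smul, map_add, map_smul, smul_eq_mul, smul_eq_mul, inv_mul_eq_div,
        le_div_iff₀ hte] at this
      exact this
    have hc1 : Tendsto (fun ε : ℝ => m * (t + ε)) (nhdsWithin 0 (Ioi 0)) (nhds (m * t)) := by
      have : Continuous fun ε : ℝ => m * (t + ε) := by fun_prop
      simpa using (this.tendsto 0).mono_left nhdsWithin_le_nhds
    have hc2 : Tendsto (fun ε : ℝ => f0 z + ε * f0 x0) (nhdsWithin 0 (Ioi 0)) (nhds (f0 z)) := by
      have : Continuous fun ε : ℝ => f0 z + ε * f0 x0 := by fun_prop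
      simpa using (this.tendsto 0).mono_left nhdsWithin_le_nhds
    exact le_of_tendsto_of_tendsto hc1 hc2 (by
      filter_upwards [self_mem_nhdsWithin] with ε hε using h ε hε)
  set g : (Fin k → ℝ) × ℝ → ℝ := fun p => f0 p.1 - m * p.2 + p.2 with hg
  have hgc : Continuous g := by
    have := lin_cont f0
    fun_prop
  have hgpos : ∀ p ∈ Q, p ≠ 0 → 0 < g p := by
    rintro ⟨z, t⟩ hp hp0
    have h1 := hlow _ hp
    simp only [hg] at h1 ⊢
    rcases eq_or_lt_of_le hp.1 with h | h
    · simp only at h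
      subst h
      have hz0 : z ≠ 0 := fun h => hp0 (by simp [h])
      have := rec_pos hk hkN hf hf0 (fun j => f j x0) hx0 (fun w hw => by
        have := hlow (w, 0) ⟨le_rfl, by simpa using hw⟩
        simpa using this) (z := z) (by simpa using hp.2) hz0
      simpa using this
    · simp only at h
      linarith
  obtain ⟨C, hC⟩ := ((isCompact_sphere (0 : (Fin k → ℝ) × ℝ) 1).inter_left hQc).exists_bound_of_continuousOn
    (f := fun p => (g p)⁻¹) (hgc.continuousOn.inv₀ fun p hp => by
      refine (hgpos p hp.1 ?_).ne'
      rintro rfl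
      simpa using hp.2)
  refine ⟨m, max C 1, by positivity, fun x hx => ⟨hm' x hx, ?_⟩⟩
  set n := ‖((x, 1) : (Fin k → ℝ) × ℝ)‖ with hn
  have hn1 : ‖x‖ ≤ n := le_max_left _ _
  have hnpos : 0 < n := norm_pos_iff.2 (by simp)
  have hp : n⁻¹ • ((x, 1) : (Fin k → ℝ) × ℝ) ∈ Q ∩ Metric.sphere 0 1 := by
    refine ⟨⟨by simp; positivity, fun j => ?_⟩, ?_⟩
    · have h1 := hx j
      rw [aff_zero (f j) x] at h1
      have e : f j x0 * ((f j).linear (n⁻¹ • ((x, 1) : (Fin k → ℝ) × ℝ)).1 +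
        (n⁻¹ • ((x, 1) : (Fin k → ℝ) × ℝ)).2 * f j 0) = n⁻¹ * (f j x0 * ((f j).linear x + f j 0)) := by
        simp; ring
      rw [e]
      exact mul_nonneg (by positivity) h1.le
    · rw [mem_sphere_zero_iff_norm, norm_smul, ← hn, Real.norm_of_nonneg (by positivity)]
      field_simp
  have h1 := hC _ hp
  have e : g (n⁻¹ • ((x, 1) : (Fin k → ℝ) × ℝ)) = n⁻¹ * (f0 x - m + 1) := by
    simp [hg]; ring
  simp only [e] at h1
  have hpos : 0 < f0 x - m + 1 := by linarith [hm' x hx]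
  rw [Real.norm_of_nonneg (by positivity), mul_inv, inv_inv, ← div_eq_mul_inv,
    div_le_iff₀ hpos] at h1
  calc ‖x‖ ≤ n := hn1
    _ ≤ C * (f0 x - m + 1) := h1
    _ ≤ _ := by gcongr; exact le_max_left _ _

/-- The matrix of the linear parts of the forms indexed by `σ`. -/
def LMat (f : Fin N → ((Fin k → ℝ) →ᵃ[ℝ] ℝ)) (σ : Fin k → Fin N) : Matrix (Fin k) (Fin k) ℝ :=
  Matrix.of fun i c : Fin k => (f (σ i)).linear (Pi.single c 1)

theorem lin_expand (g : (Fin k → ℝ) →ₗ[ℝ] ℝ) (z : Fin k → ℝ) :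
    g z = ∑ c, g (Pi.single c 1) * z c := by
  conv_lhs => rw [pi_eq_sum_univ' z]
  rw [map_sum]
  refine Finset.sum_congr rfl fun c _ => ?_
  rw [map_smul, smul_eq_mul, mul_comm]

theorem LMat_mulVec (f : Fin N → ((Fin k → ℝ) →ᵃ[ℝ] ℝ)) (σ : Fin k → Fin N) (z : Fin k → ℝ)
    (i : Fin k) : (LMat f σ).mulVec z i = (f (σ i)).linear z := by
  rw [lin_expand]
  simp [LMat, Matrix.mulVec, dotProduct]

theorem LMat_det_ne {f : Fin N → ((Fin k → ℝ) →ᵃ[ℝ] ℝ)} (hf : Generic f) {σ : Fin k → Fin N}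
    (hσ : Function.Injective σ) : (LMat f σ).det ≠ 0 := by
  intro h
  obtain ⟨v, hv, hv0⟩ := Matrix.exists_mulVec_eq_zero_iff.2 h
  apply hv
  refine lin_inj hf (S := Finset.univ.image σ) ?_ ?_
  · rw [Finset.card_image_of_injective _ hσ]; simp
  · intro j hj
    obtain ⟨i, -, rfl⟩ := Finset.mem_image.1 hj
    rw [← LMat_mulVec, hv0]; rfl

theorem rpow_le_exp {a b x : ℝ} (ha : 0 < a) (hb : 0 < b) (hx : 0 ≤ x) :
    x ^ a ≤ (a / b) ^ a * Real.exp (b * x) := by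
  have h1 : x ≤ (a / b) * Real.exp (b / a * x) := by
    have := Real.add_one_le_exp (b / a * x)
    have h2 : b / a * x ≤ Real.exp (b / a * x) := by linarith
    calc x = (a / b) * (b / a * x) := by field_simp
      _ ≤ _ := by gcongr
  calc x ^ a ≤ ((a / b) * Real.exp (b / a * x)) ^ a := Real.rpow_le_rpow hx h1 ha.le
    _ = (a / b) ^ a * Real.exp (b * x) := by
      rw [Real.mul_rpow (by positivity) (Real.exp_pos _).le, ← Real.exp_mul]
      congr 2
      field_simp

theorem integrable_one {a δ : ℝ} (ha : 0 < a) (hδ : 0 < δ) :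
    Integrable fun y : ℝ => |y| ^ (a - 1) * Real.exp (-δ * |y|) := by
  have hf : IntegrableOn (fun x : ℝ => |x| ^ (a - 1) * Real.exp (-δ * |x|)) (Ioi 0) := by
    have := integrableOn_rpow_mul_exp_neg_mul_rpow (p := 1) (s := a - 1) (b := δ)
      (by linarith) one_pos hδ
    refine this.congr_fun (fun x hx => ?_) measurableSet_Ioi
    simp [abs_of_pos (show 0 < x from hx)]
  have int_Iic : IntegrableOn (fun x : ℝ => |x| ^ (a - 1) * Real.exp (-δ * |x|)) (Iic 0) := by
    rw [← Measure.map_neg_eq_self (volume : Measure ℝ)]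
    let m : MeasurableEmbedding fun x : ℝ => -x := (Homeomorph.neg ℝ).measurableEmbedding
    rw [m.integrableOn_map_iff]
    simp_rw [Function.comp_def, abs_neg, neg_preimage, neg_Iic, neg_zero]
    exact Iff.mpr integrableOn_Ici_iff_integrableOn_Ioi hf
  have := int_Iic.union hf
  rwa [Iic_union_Ioi, integrableOn_univ] at this

theorem integrable_prod_forms {f : Fin N → ((Fin k → ℝ) →ᵃ[ℝ] ℝ)} (hf : Generic f)
    {σ : Fin k → Fin N} (hσ : Function.Injective σ) {φ : Fin k → ℝ → ℝ}
    (hφ : ∀ i, Integrable (φ i)) :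
    Integrable fun x : Fin k → ℝ => ∏ i, φ i (f (σ i) x) := by
  have h1 : Integrable (fun y : Fin k → ℝ => ∏ i, φ i (y i)) := Integrable.fintype_prod hφ
  have h2 := h1.comp_add_right (fun i => f (σ i) 0)
  have hd := LMat_det_ne hf hσ
  have h3 := h2.smul_measure (c := ENNReal.ofReal (abs ((LMat f σ).det)⁻¹)) ENNReal.ofReal_ne_top
  rw [← Real.map_matrix_volume_pi_eq_smul_volume_pi hd] at h3
  have h4 := h3.comp_measurable
    (LinearMap.continuous_of_finiteDimensional (Matrix.toLin' (LMat f σ))).measurable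
  refine h4.congr (Eventually.of_forall fun x => ?_)
  simp only [Function.comp_apply, Pi.add_apply, Matrix.toLin'_apply, LMat_mulVec]
  refine Finset.prod_congr rfl fun i _ => ?_
  rw [← aff_zero]

theorem aff_bound (g : (Fin k → ℝ) →ᵃ[ℝ] ℝ) : ∃ K : ℝ, 0 < K ∧ ∀ x, |g x| ≤ K * (‖x‖ + 1) := by
  let L := LinearMap.toContinuousLinearMap g.linear
  refine ⟨‖L‖ + |g 0| + 1, by positivity, fun x => ?_⟩
  rw [aff_zero]
  have h1 : |g.linear x| ≤ ‖L‖ * ‖x‖ := L.le_opNorm x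
  have := abs_add_le (g.linear x) (g 0)
  nlinarith [norm_nonneg x, norm_nonneg L, abs_nonneg (g 0), mul_nonneg (abs_nonneg (g 0)) (norm_nonneg x)]

/-- All the forms are bounded by a multiple of `f0 - m + 1` on the region. -/
theorem forms_bound {f : Fin N → ((Fin k → ℝ) →ᵃ[ℝ] ℝ)} (hk : 1 ≤ k) (hkN : k ≤ N)
    (hf : Generic f)
    {f0 : (Fin k → ℝ) →ₗ[ℝ] ℝ} (hf0 : GenericLin f f0) {x0 : Fin k → ℝ} (hx0 : x0 ∈ HypCompl f)
    (hb : BddBelow (f0 '' Reg f x0)) :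
    ∃ m K : ℝ, 0 < K ∧ ∀ x ∈ Reg f x0, 1 ≤ f0 x - m ∧ |f0 x| ≤ K * (f0 x - m) ∧
      ∀ j, |f j x| ≤ K * (f0 x - m) := by
  obtain ⟨m, C, hC, h⟩ := coercive hk hkN hf hf0 hx0 hb
  choose K hK hKb using fun j => aff_bound (f j)
  obtain ⟨K0, hK0, hK0b⟩ := aff_bound f0.toAffineMap
  have hs : 0 ≤ ∑ j, K j := Finset.sum_nonneg fun j _ => (hK j).le
  refine ⟨m - 1, (K0 + ∑ j, K j) * (C + 1), by positivity, fun x hx => ?_⟩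
  obtain ⟨h1, h2⟩ := h x hx
  have h3 : ‖x‖ + 1 ≤ (C + 1) * (f0 x - (m - 1)) := by nlinarith
  have h4 : 0 ≤ ‖x‖ + 1 := by positivity
  refine ⟨by linarith, ?_, fun j => ?_⟩
  · calc |f0 x| ≤ K0 * (‖x‖ + 1) := hK0b x
      _ ≤ (K0 + ∑ j, K j) * (‖x‖ + 1) := by gcongr; linarith
      _ ≤ _ := by rw [mul_assoc]; gcongr
  · calc |f j x| ≤ K j * (‖x‖ + 1) := hKb j x
      _ ≤ (K0 + ∑ j, K j) * (‖x‖ + 1) := by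
        gcongr
        have := Finset.single_le_sum (f := K) (fun j _ => (hK j).le) (Finset.mem_univ j)
        linarith
      _ ≤ _ := by rw [mul_assoc]; gcongr

/-- the weight -/
def Wt (f : Fin N → ((Fin k → ℝ) →ᵃ[ℝ] ℝ)) (α : Fin N → ℝ) (T : Finset (Fin N))
    (x : Fin k → ℝ) : ℝ := (∏ j, |f j x| ^ α j) * (∏ j ∈ T, f j x)⁻¹

theorem Wt_meas (f : Fin N → ((Fin k → ℝ) →ᵃ[ℝ] ℝ)) (α : Fin N → ℝ) (T : Finset (Fin N)) :
    Measurable (Wt f α T) := by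
  have h : ∀ j, Measurable (f j) := fun j => (aff_cont (f j)).measurable
  unfold Wt
  refine Measurable.mul ?_ (Measurable.inv ?_)
  · exact Finset.measurable_fun_prod _ fun j _ => (measurable_abs.comp (h j)).pow_const _
  · exact Finset.measurable_fun_prod _ fun j _ => h j

theorem int_real {f : Fin N → ((Fin k → ℝ) →ᵃ[ℝ] ℝ)} (hk : 1 ≤ k) (hkN : k ≤ N)
    (hf : Generic f)
    {f0 : (Fin k → ℝ) →ₗ[ℝ] ℝ} (hf0 : GenericLin f f0) {x0 : Fin k → ℝ} (hx0 : x0 ∈ HypCompl f)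
    (hb : BddBelow (f0 '' Reg f x0)) {α : Fin N → ℝ} (hα : ∀ j, 0 < α j)
    {S : Finset (Fin N)} (hS : S.card = k) {ε : ℝ} (hε : 0 < ε) :
    IntegrableOn (fun x => Real.exp (-(ε * f0 x)) * Wt f α S x) (Reg f x0) := by
  obtain ⟨m, K, hK, hKb⟩ := forms_bound hk hkN hf hf0 hx0 hb
  set σ : Fin k → Fin N := fun i => ((S.orderIsoOfFin hS i : S) : Fin N) with hσ
  have hinj : Function.Injective σ := fun a b h => by
    simpa [hσ, Subtype.ext_iff] using h
  have himg : Finset.univ.image σ = S := by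
    apply Finset.eq_of_subset_of_card_le
    · intro j hj
      obtain ⟨i, -, rfl⟩ := Finset.mem_image.1 hj
      exact (S.orderIsoOfFin hS i).2
    · rw [Finset.card_image_of_injective _ hinj]; simp [hS]
  have hNpos : (0 : ℝ) < N := by exact_mod_cast (by omega : 0 < N)
  have hkpos : (0 : ℝ) < k := by exact_mod_cast (by omega : 0 < k)
  set η : ℝ := ε / (2 * N * K) with hη
  set δ : ℝ := ε / (2 * k * K) with hδ
  have hηp : 0 < η := by positivity
  have hδp : 0 < δ := by positivity
  have hInt := integrable_prod_forms hf hinj (φ := fun i y => |y| ^ (α (σ i) - 1) * Real.exp (-δ * |y|))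
    (fun i => integrable_one (hα _) hδp)
  set C : ℝ := Real.exp (-(ε * m)) * ∏ j ∈ Sᶜ, (α j / η) ^ α j with hC
  have hCp : 0 ≤ C := by
    refine mul_nonneg (Real.exp_pos _).le (Finset.prod_nonneg fun j _ => ?_)
    have := hα j
    positivity
  refine Integrable.mono' (hInt.integrableOn.const_mul C) ?_ ?_
  · have := (lin_cont f0).measurable
    have := Wt_meas f α S
    exact Measurable.aestronglyMeasurable (by fun_prop)
  · refine (ae_restrict_iff' (Reg_open f x0).measurableSet).2 (Eventually.of_forall fun x hx => ?_)
    obtain ⟨h1, -, h2⟩ := hKb x hx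
    have hne : ∀ j, 0 < |f j x| := fun j => abs_pos.2 fun h => by
      have := hx j
      simp [h] at this
    set w := f0 x - m with hw
    have hw0 : 0 ≤ w := by linarith
    have e1 : ‖Real.exp (-(ε * f0 x)) * Wt f α S x‖ =
        Real.exp (-(ε * m)) * Real.exp (-(ε * w)) * ((∏ j ∈ S, |f j x| ^ (α j - 1)) * ∏ j ∈ Sᶜ, |f j x| ^ α j) := by
      rw [Wt, norm_mul, Real.norm_of_nonneg (Real.exp_pos _).le, ← Real.exp_add, Real.norm_eq_abs,
        abs_mul, abs_inv, Finset.abs_prod, Finset.abs_prod, ← Finset.prod_mul_prod_compl S]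
      congr 1
      · congr 1; rw [hw]; ring
      · rw [mul_right_comm, ← Finset.prod_inv_distrib, ← Finset.prod_mul_distrib]
        congr 1
        · refine Finset.prod_congr rfl fun j _ => ?_
          rw [Real.rpow_sub_one (hne j).ne', abs_of_nonneg (by positivity)]; rfl
        · refine Finset.prod_congr rfl fun j _ => ?_
          rw [abs_of_nonneg (by positivity)]
    have e2 : ∏ j ∈ Sᶜ, |f j x| ^ α j ≤ (∏ j ∈ Sᶜ, (α j / η) ^ α j) * Real.exp (ε / 2 * w) := by
      calc ∏ j ∈ Sᶜ, |f j x| ^ α j ≤ ∏ j ∈ Sᶜ, ((α j / η) ^ α j * Real.exp (η * (K * w))) := by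
            refine Finset.prod_le_prod (fun j _ => by positivity) fun j _ => ?_
            refine (rpow_le_exp (hα j) hηp (abs_nonneg _)).trans ?_
            have := hα j
            gcongr
            exact h2 j
        _ = (∏ j ∈ Sᶜ, (α j / η) ^ α j) * Real.exp ((Sᶜ.card : ℝ) * (η * (K * w))) := by
            rw [Finset.prod_mul_distrib, Finset.prod_const, ← Real.exp_nat_mul]
        _ ≤ _ := by
            refine mul_le_mul_of_nonneg_left (Real.exp_le_exp.2 ?_) ?_
            · have hc : (Sᶜ.card : ℝ) ≤ N := by
                exact_mod_cast (Finset.card_le_univ _).trans (by simp)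
              calc (Sᶜ.card : ℝ) * (η * (K * w)) ≤ N * (η * (K * w)) := by gcongr
                _ = ε / 2 * w := by rw [hη]; field_simp
            · exact Finset.prod_nonneg fun j _ => by have := hα j; positivity
    have e3 : Real.exp (-(ε / 2 * w)) ≤ ∏ j ∈ S, Real.exp (-δ * |f j x|) := by
      rw [← Real.exp_sum]
      apply Real.exp_le_exp.2
      rw [← Finset.mul_sum]
      have : ∑ j ∈ S, |f j x| ≤ k * (K * w) := by
        have := Finset.sum_le_card_nsmul S (fun j => |f j x|) (K * w) (fun j _ => h2 j)
        rwa [hS, nsmul_eq_mul] at this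
      have h5 : δ * ∑ j ∈ S, |f j x| ≤ δ * (k * (K * w)) := by gcongr
      have h6 : δ * (k * (K * w)) = ε / 2 * w := by rw [hδ]; field_simp
      linarith
    have e4 : ∏ i, (|f (σ i) x| ^ (α (σ i) - 1) * Real.exp (-δ * |f (σ i) x|)) =
        (∏ j ∈ S, |f j x| ^ (α j - 1)) * ∏ j ∈ S, Real.exp (-δ * |f j x|) := by
      rw [← Finset.prod_mul_distrib, ← himg, Finset.prod_image hinj.injOn]
    rw [e1, e4]
    have p1 : 0 ≤ ∏ j ∈ S, |f j x| ^ (α j - 1) := Finset.prod_nonneg fun j _ => by positivity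
    have e5 : Real.exp (-(ε * w)) * Real.exp (ε / 2 * w) = Real.exp (-(ε / 2 * w)) := by
      rw [← Real.exp_add]; congr 1; ring
    have p3 : 0 ≤ ∏ j ∈ Sᶜ, (α j / η) ^ α j := Finset.prod_nonneg fun j _ => by
      have := hα j; positivity
    calc _ ≤ Real.exp (-(ε * m)) * Real.exp (-(ε * w)) * ((∏ j ∈ S, |f j x| ^ (α j - 1)) *
          ((∏ j ∈ Sᶜ, (α j / η) ^ α j) * Real.exp (ε / 2 * w))) := by gcongr
      _ = C * ((∏ j ∈ S, |f j x| ^ (α j - 1)) * Real.exp (-(ε / 2 * w))) := by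
          rw [← e5, hC]; ring
      _ ≤ _ := by gcongr

/-- the complex integrand -/
def Jf (f : Fin N → ((Fin k → ℝ) →ᵃ[ℝ] ℝ)) (f0 : (Fin k → ℝ) →ₗ[ℝ] ℝ) (α : Fin N → ℝ)
    (lam : ℂ) (T : Finset (Fin N)) (x : Fin k → ℝ) : ℂ :=
  Complex.exp (-(lam * Complex.ofReal (f0 x))) * Complex.ofReal (Wt f α T x)

theorem Jf_meas (f : Fin N → ((Fin k → ℝ) →ᵃ[ℝ] ℝ)) (f0 : (Fin k → ℝ) →ₗ[ℝ] ℝ) (α : Fin N → ℝ)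
    (lam : ℂ) (T : Finset (Fin N)) : Measurable (Jf f f0 α lam T) := by
  have := (lin_cont f0).measurable
  have := Wt_meas f α T
  unfold Jf
  fun_prop

theorem Jf_norm (f : Fin N → ((Fin k → ℝ) →ᵃ[ℝ] ℝ)) (f0 : (Fin k → ℝ) →ₗ[ℝ] ℝ) (α : Fin N → ℝ)
    (lam : ℂ) (T : Finset (Fin N)) (x : Fin k → ℝ) :
    ‖Jf f f0 α lam T x‖ = Real.exp (-(lam.re * f0 x)) * |Wt f α T x| := by
  rw [Jf, norm_mul, Complex.norm_exp, Complex.norm_real, Real.norm_eq_abs]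
  congr 2
  simp

/-- Bound on a factor times the integrand, locally uniform in `lam`. -/
theorem Jf_bound {f : Fin N → ((Fin k → ℝ) →ᵃ[ℝ] ℝ)} {f0 : (Fin k → ℝ) →ₗ[ℝ] ℝ}
    (α : Fin N → ℝ) (T : Finset (Fin N)) {m K ε : ℝ} (hK : 0 < K) (hε : 0 < ε)
    {x : Fin k → ℝ} (h1 : 1 ≤ f0 x - m) {p : ℝ} (hp : |p| ≤ K * (f0 x - m)) {lam : ℂ}
    (hl : ε ≤ lam.re) :
    |p| * ‖Jf f f0 α lam T x‖ ≤ (K * (2 / ε) * Real.exp (|m| * (lam.re - ε / 2))) *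
      ‖Real.exp (-(ε / 2 * f0 x)) * Wt f α T x‖ := by
  rw [Jf_norm, norm_mul, Real.norm_of_nonneg (Real.exp_pos _).le, Real.norm_eq_abs]
  set w := f0 x - m with hw
  have h2 : w ≤ (2 / ε) * Real.exp (ε / 2 * w) := by
    have := Real.add_one_le_exp (ε / 2 * w)
    calc w = (2 / ε) * (ε / 2 * w) := by field_simp
      _ ≤ _ := by gcongr; linarith
  have h3 : Real.exp (ε / 2 * w) * Real.exp (-(lam.re * f0 x)) ≤
      Real.exp (|m| * (lam.re - ε / 2)) * Real.exp (-(ε / 2 * f0 x)) := by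
    rw [← Real.exp_add, ← Real.exp_add]
    apply Real.exp_le_exp.2
    have h4 : f0 x = w + m := by rw [hw]; ring
    rw [h4]
    have h5 : -m ≤ |m| := neg_le_abs m
    nlinarith [mul_nonneg (sub_nonneg.2 hl) (show 0 ≤ w by linarith), mul_nonneg (show 0 ≤ |m| + m by linarith) (show 0 ≤ lam.re - ε / 2 by linarith)]
  calc |p| * (Real.exp (-(lam.re * f0 x)) * |Wt f α T x|)
      ≤ (K * ((2 / ε) * Real.exp (ε / 2 * w))) * (Real.exp (-(lam.re * f0 x)) * |Wt f α T x|) := by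
        gcongr
        exact hp.trans (by gcongr)
    _ = K * (2 / ε) * (Real.exp (ε / 2 * w) * Real.exp (-(lam.re * f0 x))) * |Wt f α T x| := by ring
    _ ≤ K * (2 / ε) * (Real.exp (|m| * (lam.re - ε / 2)) * Real.exp (-(ε / 2 * f0 x))) * |Wt f α T x| := by
        gcongr
    _ = _ := by ring

theorem ibp_abs {G G' : (Fin k → ℝ) → ℂ} {v : Fin k → ℝ} (hG : Integrable G) (hG' : Integrable G')
    (hm : Measurable G')
    (h : ∀ᵐ x : Fin k → ℝ, Continuous (fun t : ℝ => G (x + t • v)) ∧ ∃ s : Set ℝ, s.Countable ∧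
      ∀ t, t ∉ s → HasDerivAt (fun t : ℝ => G (x + t • v)) (G' (x + t • v)) t) :
    ∫ x, G' x = 0 := by
  have hH : Integrable (Function.uncurry fun (x : Fin k → ℝ) (t : ℝ) => G' (x + t • v))
      ((volume : Measure (Fin k → ℝ)).prod (volume.restrict (Ioc (0:ℝ) 1))) := by
    have hmeas : Measurable (Function.uncurry fun (x : Fin k → ℝ) (t : ℝ) => G' (x + t • v)) := by
      apply hm.comp
      fun_prop
    refine (integrable_prod_iff' hmeas.aestronglyMeasurable).2 ⟨?_, ?_⟩
    · exact Eventually.of_forall fun t => hG'.comp_add_right (t • v)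
    · have : (fun t : ℝ => ∫ x, ‖Function.uncurry (fun (x : Fin k → ℝ) (t : ℝ) => G' (x + t • v)) (x, t)‖)
        = fun _ => ∫ x, ‖G' x‖ := by
        funext t
        exact integral_add_right_eq_self (fun x => ‖G' x‖) (t • v)
      rw [this]
      exact integrable_const _
  have h1 := integral_integral_swap hH
  have h2 : (fun t : ℝ => ∫ x, G' (x + t • v)) = fun _ => ∫ x, G' x := by
    funext t
    exact integral_add_right_eq_self G' (t • v)
  rw [h2] at h1
  have h3 : ∫ x, ∫ t in Ioc (0:ℝ) 1, G' (x + t • v) = ∫ x, (G (x + v) - G x) := by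
    apply integral_congr_ae
    filter_upwards [h, hH.prod_right_ae] with x hx hxi
    obtain ⟨hc, s, hs, hd⟩ := hx
    have := integral_eq_of_hasDerivAt_off_countable_of_le (fun t : ℝ => G (x + t • v))
      (fun t : ℝ => G' (x + t • v)) zero_le_one hs hc.continuousOn
      (fun t ht => hd t ht.2) ((intervalIntegrable_iff_integrableOn_Ioc_of_le zero_le_one).2 hxi)
    rw [intervalIntegral.integral_of_le zero_le_one] at this
    simpa using this
  rw [h3, integral_sub (hG.comp_add_right v) hG, integral_add_right_eq_self G v, sub_self] at h1
  simpa using h1.symm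

theorem hyp_null {f : Fin N → ((Fin k → ℝ) →ᵃ[ℝ] ℝ)} {x0 : Fin k → ℝ} (hx0 : x0 ∈ HypCompl f) :
    ∀ᵐ x : Fin k → ℝ, ∀ j, f j x ≠ 0 := by
  rw [ae_all_iff]
  intro j
  let s : AffineSubspace ℝ (Fin k → ℝ) := AffineSubspace.comap (f j) (AffineSubspace.mk' (0:ℝ) ⊥)
  have hs : ∀ x, x ∈ s ↔ f j x = 0 := by
    intro x
    simp [s, AffineSubspace.mem_comap, AffineSubspace.mem_mk']
  have hne : s ≠ ⊤ := by
    intro h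
    have : x0 ∈ s := by rw [h]; trivial
    exact hx0 j ((hs x0).1 this)
  have := Measure.addHaar_affineSubspace volume s hne
  rw [ae_iff]
  convert this using 2
  ext x
  simp [hs]

theorem hasDerivAt_abs_rpow {c l a t : ℝ} (h : c + t * l ≠ 0) :
    HasDerivAt (fun t : ℝ => |c + t * l| ^ a) (|c + t * l| ^ a * (a * l / (c + t * l))) t := by
  have h0 : HasDerivAt (fun t : ℝ => c + t * l) l t := by
    simpa using ((hasDerivAt_id t).mul_const l).const_add c
  have h1 := ((h0.log h).mul_const a).exp
  have ev : (fun t : ℝ => |c + t * l| ^ a) =ᶠ[nhds t] fun t => Real.exp (Real.log (c + t * l) * a) := by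
    have := h0.continuousAt.eventually_ne h
    filter_upwards [this] with s hs
    rw [Real.rpow_def_of_pos (abs_pos.2 hs), Real.log_abs]
  have h2 := h1.congr_of_eventuallyEq ev
  refine h2.congr_deriv (Eq.symm ?_)
  have := ev.eq_of_nhds
  rw [this]
  ring

theorem Wt_insert (f : Fin N → ((Fin k → ℝ) →ᵃ[ℝ] ℝ)) (α : Fin N → ℝ) {U : Finset (Fin N)}
    {r : Fin N} (hr : r ∉ U) (x : Fin k → ℝ) :
    Wt f α (insert r U) x = Wt f α U x * (f r x)⁻¹ := by
  rw [Wt, Wt, Finset.prod_insert hr, mul_inv]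
  ring

theorem ne_of_mem_Reg {f : Fin N → ((Fin k → ℝ) →ᵃ[ℝ] ℝ)} {x0 x : Fin k → ℝ} (hx : x ∈ Reg f x0)
    (j : Fin N) : f j x ≠ 0 := fun h => by
  have := hx j
  simp [h] at this

theorem aff_line (g : (Fin k → ℝ) →ᵃ[ℝ] ℝ) (x v : Fin k → ℝ) (t : ℝ) :
    g (x + t • v) = g x + t * g.linear v := by
  rw [aff_add, map_smul, smul_eq_mul]

theorem prod_line_deriv {f : Fin N → ((Fin k → ℝ) →ᵃ[ℝ] ℝ)} {α : Fin N → ℝ}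
    {x v : Fin k → ℝ} {t : ℝ} (h : ∀ j, f j (x + t • v) ≠ 0) :
    HasDerivAt (fun t : ℝ => ∏ j, |f j (x + t • v)| ^ α j)
      ((∏ j, |f j (x + t • v)| ^ α j) * ∑ j, α j * (f j).linear v * (f j (x + t • v))⁻¹) t := by
  have h1 := HasDerivAt.fun_finsetProd (u := Finset.univ) (x := t)
    (f := fun (j : Fin N) (t : ℝ) => |f j (x + t • v)| ^ α j)
    (f' := fun j => |f j (x + t • v)| ^ α j * (α j * (f j).linear v / (f j (x + t • v))))
    (fun j _ => by
      have := h j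
      simp only [aff_line] at this ⊢
      exact hasDerivAt_abs_rpow this)
  refine h1.congr_deriv (Eq.symm ?_)
  rw [Finset.mul_sum]
  refine Finset.sum_congr rfl fun j hj => ?_
  rw [← Finset.mul_prod_erase _ _ hj, smul_eq_mul]
  ring

theorem Jf_line_deriv {f : Fin N → ((Fin k → ℝ) →ᵃ[ℝ] ℝ)} {f0 : (Fin k → ℝ) →ₗ[ℝ] ℝ}
    {α : Fin N → ℝ} {lam : ℂ} {U : Finset (Fin N)}
    {x v : Fin k → ℝ} (hv0 : f0 v = 1) (hv : ∀ j ∈ U, (f j).linear v = 0)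
    {t : ℝ} (h : ∀ j, f j (x + t • v) ≠ 0) :
    HasDerivAt (fun t : ℝ => Jf f f0 α lam U (x + t • v))
      (-lam * Jf f f0 α lam U (x + t • v) + ∑ r ∈ Uᶜ,
        (((α r * (f r).linear v : ℝ) : ℂ) * Jf f f0 α lam (insert r U) (x + t • v))) t := by
  have hW : HasDerivAt (fun t : ℝ => Wt f α U (x + t • v))
      (∑ r ∈ Uᶜ, α r * (f r).linear v * Wt f α (insert r U) (x + t • v)) t := by
    have hU : ∀ t : ℝ, ∏ j ∈ U, f j (x + t • v) = ∏ j ∈ U, f j x := fun t =>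
      Finset.prod_congr rfl fun j hj => by rw [aff_line, hv j hj, mul_zero, add_zero]
    have h1 := (prod_line_deriv (α := α) h).mul_const (∏ j ∈ U, f j x)⁻¹
    have e : (fun t : ℝ => Wt f α U (x + t • v)) =
      fun t => (∏ j, |f j (x + t • v)| ^ α j) * (∏ j ∈ U, f j x)⁻¹ := by
      funext t
      rw [Wt, hU]
    rw [e]
    refine h1.congr_deriv (Eq.symm ?_)
    rw [← Finset.sum_add_sum_compl U (fun j => α j * (f j).linear v * (f j (x + t • v))⁻¹),
      Finset.sum_eq_zero (s := U) (fun j hj => by rw [hv j hj]; ring), zero_add, Finset.mul_sum,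
      Finset.sum_mul]
    refine Finset.sum_congr rfl fun r hr => ?_
    rw [Wt_insert f α (Finset.mem_compl.1 hr), Wt, hU]
    ring
  have hE : HasDerivAt (fun t : ℝ => Complex.exp (-(lam * Complex.ofReal (f0 (x + t • v)))))
      (Complex.exp (-(lam * Complex.ofReal (f0 (x + t • v)))) * -lam) t := by
    have h0 : HasDerivAt (fun t : ℝ => Complex.ofReal (f0 (x + t • v))) 1 t := by
      have : (fun t : ℝ => Complex.ofReal (f0 (x + t • v))) = fun t : ℝ => ((f0 x : ℝ) : ℂ) + (t : ℂ) := by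
        funext t
        rw [map_add, map_smul, hv0]
        simp
      rw [this]
      exact (Complex.ofRealCLM.hasDerivAt (x := t)).const_add _
    have := ((h0.const_mul lam).neg).cexp
    simpa using this
  have := hE.fun_mul hW.ofReal_comp
  unfold Jf
  refine this.congr_deriv (Eq.symm ?_)
  rw [Complex.ofReal_sum, Finset.mul_sum]
  congr 1
  · ring
  · refine Finset.sum_congr rfl fun r _ => ?_
    push_cast
    ring

theorem Jf_line_cont {f : Fin N → ((Fin k → ℝ) →ᵃ[ℝ] ℝ)} {f0 : (Fin k → ℝ) →ₗ[ℝ] ℝ}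
    {α : Fin N → ℝ} (hα : ∀ j, 0 < α j) {lam : ℂ} {U : Finset (Fin N)}
    {x v : Fin k → ℝ} (hv : ∀ j ∈ U, (f j).linear v = 0) :
    Continuous (fun t : ℝ => Jf f f0 α lam U (x + t • v)) := by
  have hl : Continuous fun t : ℝ => x + t • v := by fun_prop
  have hU : ∀ t : ℝ, ∏ j ∈ U, f j (x + t • v) = ∏ j ∈ U, f j x := fun t =>
    Finset.prod_congr rfl fun j hj => by rw [aff_line, hv j hj, mul_zero, add_zero]
  unfold Jf Wt
  simp only [hU]
  have h0 := (lin_cont f0).comp hl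
  have h1 : Continuous fun t : ℝ => ∏ j, |f j (x + t • v)| ^ α j :=
    continuous_finsetProd _ fun j _ =>
      (((aff_cont (f j)).comp hl).abs).rpow_const fun t => Or.inr (hα j).le
  refine Continuous.mul ?_ ?_
  · exact Complex.continuous_exp.comp
      ((continuous_const.mul (Complex.continuous_ofReal.comp h0)).neg)
  · exact Complex.continuous_ofReal.comp (h1.mul continuous_const)

theorem Jf_ind_cont {f : Fin N → ((Fin k → ℝ) →ᵃ[ℝ] ℝ)} {f0 : (Fin k → ℝ) →ₗ[ℝ] ℝ}
    {x0 : Fin k → ℝ} (hx0 : x0 ∈ HypCompl f)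
    {α : Fin N → ℝ} (hα : ∀ j, 0 < α j) {lam : ℂ} {U : Finset (Fin N)}
    {x v : Fin k → ℝ} (hv : ∀ j ∈ U, (f j).linear v = 0) :
    Continuous (fun t : ℝ => (Reg f x0).indicator (Jf f f0 α lam U) (x + t • v)) := by
  have hl : Continuous fun t : ℝ => x + t • v := by fun_prop
  have e : (fun t : ℝ => (Reg f x0).indicator (Jf f f0 α lam U) (x + t • v)) =
    ((fun t : ℝ => x + t • v) ⁻¹' Reg f x0).indicator
      (fun t : ℝ => Jf f f0 α lam U (x + t • v)) := rfl
  rw [e]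
  refine continuous_indicator (fun t ht => ?_) (Jf_line_cont hα hv).continuousOn
  rw [((Reg_open f x0).preimage hl).frontier_eq] at ht
  obtain ⟨h1, h2⟩ := ht
  have h3 : ∀ j, 0 ≤ f j x0 * f j (x + t • v) := by
    intro j
    have hcl : IsClosed {t : ℝ | 0 ≤ f j x0 * f j (x + t • v)} :=
      isClosed_le continuous_const (continuous_const.mul ((aff_cont (f j)).comp hl))
    exact closure_minimal (fun s (hs : x + s • v ∈ Reg f x0) => (hs j).le) hcl h1
  have h4 : ∃ j, f j (x + t • v) = 0 := by
    by_contra hc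
    push Not at hc
    exact h2 fun j => lt_of_le_of_ne (h3 j) (mul_ne_zero (hx0 j) (hc j)).symm
  obtain ⟨j, hj⟩ := h4
  have : ∏ j, |f j (x + t • v)| ^ α j = 0 :=
    Finset.prod_eq_zero (Finset.mem_univ j) (by rw [hj, abs_zero, Real.zero_rpow (hα j).ne'])
  simp [Jf, Wt, this]

theorem ibp {f : Fin N → ((Fin k → ℝ) →ᵃ[ℝ] ℝ)} (hf : Generic f) (hk : 1 ≤ k)
    {f0 : (Fin k → ℝ) →ₗ[ℝ] ℝ}
    {x0 : Fin k → ℝ} (hx0 : x0 ∈ HypCompl f)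
    {α : Fin N → ℝ} (hα : ∀ j, 0 < α j) {lam : ℂ} {U : Finset (Fin N)} (hU : U.card = k - 1)
    {v : Fin k → ℝ} (hv0 : f0 v = 1) (hv : ∀ j ∈ U, (f j).linear v = 0)
    (hInt : IntegrableOn (Jf f f0 α lam U) (Reg f x0))
    (hInt' : ∀ r, r ∉ U → IntegrableOn (Jf f f0 α lam (insert r U)) (Reg f x0)) :
    lam * ∫ x in Reg f x0, Jf f f0 α lam U x = ∑ r ∈ Uᶜ,
      (((α r * (f r).linear v : ℝ) : ℂ) * ∫ x in Reg f x0, Jf f f0 α lam (insert r U) x) := by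
  have hvne : ∀ r, r ∉ U → (f r).linear v ≠ 0 := by
    intro r hr h
    have : v = 0 := by
      refine lin_inj hf (S := insert r U) (by rw [Finset.card_insert_of_notMem hr]; omega) ?_
      intro j hj
      rcases Finset.mem_insert.1 hj with rfl | hj
      · exact h
      · exact hv j hj
    rw [this, map_zero] at hv0
    exact zero_ne_one hv0
  have hRm := (Reg_open f x0).measurableSet
  set g : (Fin k → ℝ) → ℂ := fun x => -lam * Jf f f0 α lam U x + ∑ r ∈ Uᶜ,
        (((α r * (f r).linear v : ℝ) : ℂ) * Jf f f0 α lam (insert r U) x) with hg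
  have hi2 : ∀ r ∈ Uᶜ, IntegrableOn (fun x => ((α r * (f r).linear v : ℝ) : ℂ) * Jf f f0 α lam (insert r U) x) (Reg f x0) :=
    fun r hr => (hInt' r (Finset.mem_compl.1 hr)).const_mul _
  have hgi : IntegrableOn g (Reg f x0) :=
    Integrable.add (hInt.const_mul _) (integrable_finsetSum _ hi2)
  have hgm : Measurable g := by
    have := fun T => Jf_meas f f0 α lam T
    fun_prop
  have h0 : ∫ x, (Reg f x0).indicator g x = 0 := by
    refine ibp_abs (G := (Reg f x0).indicator (Jf f f0 α lam U)) (v := v)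
      (hInt.integrable_indicator hRm) (hgi.integrable_indicator hRm) (hgm.indicator hRm) ?_
    filter_upwards [hyp_null hx0] with x hx
    refine ⟨Jf_ind_cont hx0 hα hv, {t | ∃ j, f j (x + t • v) = 0}, ?_, ?_⟩
    · rw [ofPred_exists]
      refine countable_iUnion fun j => Set.Subsingleton.countable ?_
      intro a ha b hb
      simp only [mem_ofPred_eq, aff_line] at ha hb
      by_cases hj : j ∈ U
      · rw [hv j hj, mul_zero, add_zero] at ha
        exact absurd ha (hx j)
      · exact mul_right_cancel₀ (hvne j hj) (by linarith)
    · intro t ht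
      have hne : ∀ j, f j (x + t • v) ≠ 0 := by simpa using ht
      have hl : Continuous fun t : ℝ => x + t • v := by fun_prop
      by_cases hmem : x + t • v ∈ Reg f x0
      · rw [indicator_of_mem hmem]
        refine (Jf_line_deriv hv0 hv hne).congr_of_eventuallyEq ?_
        filter_upwards [((Reg_open f x0).preimage hl).mem_nhds hmem] with s hs
        exact indicator_of_mem (show x + s • v ∈ Reg f x0 from hs) _
      · rw [indicator_of_notMem hmem]
        have : ∃ j, f j x0 * f j (x + t • v) < 0 := by
          by_contra hc
          push Not at hc
          exact hmem fun j => lt_of_le_of_ne (hc j) (mul_ne_zero (hx0 j) (hne j)).symm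
        obtain ⟨j, hj⟩ := this
        have hc : Continuous fun t : ℝ => f j x0 * f j (x + t • v) :=
          continuous_const.mul ((aff_cont (f j)).comp hl)
        refine (hasDerivAt_const t (0 : ℂ)).congr_of_eventuallyEq ?_
        filter_upwards [(hc.tendsto t).eventually (gt_mem_nhds hj)] with s hs
        exact indicator_of_notMem (fun h => (h j).not_gt hs) _
  rw [integral_indicator hRm, hg, integral_add (hInt.const_mul _) (integrable_finsetSum _ hi2),
    integral_const_mul, integral_finsetSum _ hi2] at h0
  simp only [integral_const_mul] at h0
  linear_combination -h0

theorem Jf_mul_int {f : Fin N → ((Fin k → ℝ) →ᵃ[ℝ] ℝ)} (hk : 1 ≤ k) (hkN : k ≤ N)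
    (hf : Generic f)
    {f0 : (Fin k → ℝ) →ₗ[ℝ] ℝ} (hf0 : GenericLin f f0) {x0 : Fin k → ℝ} (hx0 : x0 ∈ HypCompl f)
    (hb : BddBelow (f0 '' Reg f x0)) {α : Fin N → ℝ} (hα : ∀ j, 0 < α j)
    {S : Finset (Fin N)} (hS : S.card = k) {lam : ℂ} (hl : 0 < lam.re)
    {m K : ℝ} (hK : 0 < K) (hm : ∀ x ∈ Reg f x0, 1 ≤ f0 x - m)
    {p : (Fin k → ℝ) → ℝ} (hp : Measurable p) (hpb : ∀ x ∈ Reg f x0, |p x| ≤ K * (f0 x - m)) :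
    IntegrableOn (fun x => (p x : ℂ) * Jf f f0 α lam S x) (Reg f x0) := by
  have h1 := (int_real hk hkN hf hf0 hx0 hb hα hS (half_pos hl)).norm.const_mul
    (K * (2 / lam.re) * Real.exp (|m| * (lam.re - lam.re / 2)))
  refine Integrable.mono' h1 ?_ ?_
  · have := Jf_meas f f0 α lam S
    exact Measurable.aestronglyMeasurable (by fun_prop)
  · refine (ae_restrict_iff' (Reg_open f x0).measurableSet).2 (Eventually.of_forall fun x hx => ?_)
    rw [norm_mul, Complex.norm_real, Real.norm_eq_abs]
    exact Jf_bound α S hK hl (hm x hx) (hpb x hx) le_rfl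

theorem Jf_int {f : Fin N → ((Fin k → ℝ) →ᵃ[ℝ] ℝ)} (hk : 1 ≤ k) (hkN : k ≤ N)
    (hf : Generic f)
    {f0 : (Fin k → ℝ) →ₗ[ℝ] ℝ} (hf0 : GenericLin f f0) {x0 : Fin k → ℝ} (hx0 : x0 ∈ HypCompl f)
    (hb : BddBelow (f0 '' Reg f x0)) {α : Fin N → ℝ} (hα : ∀ j, 0 < α j)
    {S : Finset (Fin N)} (hS : S.card = k) {lam : ℂ} (hl : 0 < lam.re) :
    IntegrableOn (Jf f f0 α lam S) (Reg f x0) := by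
  obtain ⟨m, K, hK, hKb⟩ := forms_bound hk hkN hf hf0 hx0 hb
  have := Jf_mul_int hk hkN hf hf0 hx0 hb hα hS hl one_pos (fun x hx => (hKb x hx).1)
    (p := fun _ => 1) measurable_const (fun x hx => by simpa using (hKb x hx).1)
  simpa using this

theorem Jf_erase {f : Fin N → ((Fin k → ℝ) →ᵃ[ℝ] ℝ)} {f0 : (Fin k → ℝ) →ₗ[ℝ] ℝ}
    {x0 x : Fin k → ℝ} (hx : x ∈ Reg f x0) (α : Fin N → ℝ) {S : Finset (Fin N)} {j : Fin N}
    (hj : j ∈ S) (lam : ℂ) :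
    (f j x : ℂ) * Jf f f0 α lam S x = Jf f f0 α lam (S.erase j) x := by
  have h1 := Wt_insert f α (Finset.notMem_erase j S) x
  rw [Finset.insert_erase hj] at h1
  have h2 : f j x * Wt f α S x = Wt f α (S.erase j) x := by
    rw [h1]
    have := ne_of_mem_Reg hx j
    field_simp
  rw [Jf, Jf, ← h2]
  push_cast
  ring

theorem Jf_mul_form_int {f : Fin N → ((Fin k → ℝ) →ᵃ[ℝ] ℝ)} (hk : 1 ≤ k) (hkN : k ≤ N)
    (hf : Generic f)
    {f0 : (Fin k → ℝ) →ₗ[ℝ] ℝ} (hf0 : GenericLin f f0) {x0 : Fin k → ℝ} (hx0 : x0 ∈ HypCompl f)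
    (hb : BddBelow (f0 '' Reg f x0)) {α : Fin N → ℝ} (hα : ∀ j, 0 < α j)
    {S : Finset (Fin N)} (hS : S.card = k) {lam : ℂ} (hl : 0 < lam.re) (j : Fin N) :
    IntegrableOn (fun x => (f j x : ℂ) * Jf f f0 α lam S x) (Reg f x0) := by
  obtain ⟨m, K, hK, hKb⟩ := forms_bound hk hkN hf hf0 hx0 hb
  exact Jf_mul_int hk hkN hf hf0 hx0 hb hα hS hl hK (fun x hx => (hKb x hx).1)
    (aff_cont (f j)).measurable (fun x hx => (hKb x hx).2.2 j)

theorem Jf_erase_int {f : Fin N → ((Fin k → ℝ) →ᵃ[ℝ] ℝ)} (hk : 1 ≤ k) (hkN : k ≤ N)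
    (hf : Generic f)
    {f0 : (Fin k → ℝ) →ₗ[ℝ] ℝ} (hf0 : GenericLin f f0) {x0 : Fin k → ℝ} (hx0 : x0 ∈ HypCompl f)
    (hb : BddBelow (f0 '' Reg f x0)) {α : Fin N → ℝ} (hα : ∀ j, 0 < α j)
    {S : Finset (Fin N)} (hS : S.card = k) {lam : ℂ} (hl : 0 < lam.re) {j : Fin N} (hj : j ∈ S) :
    IntegrableOn (Jf f f0 α lam (S.erase j)) (Reg f x0) :=
  (Jf_mul_form_int hk hkN hf hf0 hx0 hb hα hS hl j).congr_fun
    (fun _ hx => Jf_erase hx α hj lam) (Reg_open f x0).measurableSet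

theorem Jf_hasDeriv {f : Fin N → ((Fin k → ℝ) →ᵃ[ℝ] ℝ)} (hk : 1 ≤ k) (hkN : k ≤ N)
    (hf : Generic f)
    {f0 : (Fin k → ℝ) →ₗ[ℝ] ℝ} (hf0 : GenericLin f f0) {x0 : Fin k → ℝ} (hx0 : x0 ∈ HypCompl f)
    (hb : BddBelow (f0 '' Reg f x0)) {α : Fin N → ℝ} (hα : ∀ j, 0 < α j)
    {S : Finset (Fin N)} (hS : S.card = k) {lam : ℂ} (hl : 0 < lam.re) :
    HasDerivAt (fun l : ℂ => ∫ x in Reg f x0, Jf f f0 α l S x)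
      (∫ x in Reg f x0, -(f0 x : ℂ) * Jf f f0 α lam S x) lam := by
  obtain ⟨m, K, hK, hKb⟩ := forms_bound hk hkN hf hf0 hx0 hb
  set ε := lam.re / 2 with hε
  have hεp : 0 < ε := by positivity
  have hs : {z : ℂ | ε < z.re ∧ z.re < 2 * lam.re} ∈ nhds lam := by
    refine IsOpen.mem_nhds ?_ ⟨by linarith, by linarith⟩
    exact (isOpen_lt continuous_const Complex.continuous_re).inter
      (isOpen_lt Complex.continuous_re continuous_const)
  have h1 := (int_real hk hkN hf hf0 hx0 hb hα hS (half_pos hεp)).norm.const_mul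
    (K * (2 / ε) * Real.exp (|m| * (2 * lam.re - ε / 2)))
  have h0m := (lin_cont f0).measurable
  refine (hasDerivAt_integral_of_dominated_loc_of_deriv_le (F := fun l x => Jf f f0 α l S x)
    (F' := fun l x => -(f0 x : ℂ) * Jf f f0 α l S x) hs ?_ ?_ ?_ ?_ h1 ?_).2
  · exact Eventually.of_forall fun l => (Jf_meas f f0 α l S).aestronglyMeasurable
  · exact Jf_int hk hkN hf hf0 hx0 hb hα hS hl
  · have := Jf_meas f f0 α lam S
    exact Measurable.aestronglyMeasurable (by fun_prop)
  · refine (ae_restrict_iff' (Reg_open f x0).measurableSet).2 (Eventually.of_forall fun x hx => ?_)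
    intro l hl
    rw [norm_mul, norm_neg, Complex.norm_real, Real.norm_eq_abs]
    refine (Jf_bound α S hK hεp (hKb x hx).1 (hKb x hx).2.1 hl.1.le).trans ?_
    have := hl.2.le
    gcongr
  · refine Eventually.of_forall fun x l _ => ?_
    unfold Jf
    have h2 : HasDerivAt (fun l : ℂ => -(l * (f0 x : ℂ))) (-(f0 x : ℂ)) l := by
      simpa using ((hasDerivAt_id l).mul_const (f0 x : ℂ)).fun_neg
    refine (h2.cexp.mul_const _).congr_deriv ?_
    ring

theorem exists_dir {f : Fin N → ((Fin k → ℝ) →ᵃ[ℝ] ℝ)} {f0 : (Fin k → ℝ) →ₗ[ℝ] ℝ}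
    (hf0 : GenericLin f f0) {U : Finset (Fin N)} (hU : U.card = k - 1) :
    ∃ v, f0 v = 1 ∧ ∀ j ∈ U, (f j).linear v = 0 := by
  obtain ⟨x, y, hx, hy, hxy⟩ := hf0.2 U hU
  refine ⟨(f0 x - f0 y)⁻¹ • (x - y), ?_, fun j hj => ?_⟩
  · rw [map_smul, map_sub, smul_eq_mul, inv_mul_cancel₀ (sub_ne_zero.2 hxy)]
  · have h1 := hx j hj
    have h2 := hy j hj
    rw [aff_zero] at h1 h2
    rw [map_smul, map_sub, show (f j).linear x = (f j).linear y by linarith, sub_self, smul_zero]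

theorem dir_ne {f : Fin N → ((Fin k → ℝ) →ᵃ[ℝ] ℝ)} (hf : Generic f) (hk : 1 ≤ k)
    {f0 : (Fin k → ℝ) →ₗ[ℝ] ℝ} {U : Finset (Fin N)} (hU : U.card = k - 1) {v : Fin k → ℝ}
    (hv0 : f0 v = 1) (hv : ∀ j ∈ U, (f j).linear v = 0) {r : Fin N} (hr : r ∉ U) :
    (f r).linear v ≠ 0 := by
  intro h
  have : v = 0 := by
    refine lin_inj hf (S := insert r U) (by rw [Finset.card_insert_of_notMem hr]; omega) ?_
    intro j hj
    rcases Finset.mem_insert.1 hj with rfl | hj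
    · exact h
    · exact hv j hj
  rw [this, map_zero] at hv0
  exact zero_ne_one hv0

theorem f0_expand {f : Fin N → ((Fin k → ℝ) →ᵃ[ℝ] ℝ)} (hf : Generic f) (hk : 1 ≤ k)
    {f0 : (Fin k → ℝ) →ₗ[ℝ] ℝ} {S : Finset (Fin N)} (hS : S.card = k) {v : Fin N → Fin k → ℝ}
    (hv0 : ∀ j ∈ S, f0 (v j) = 1) (hv : ∀ j ∈ S, ∀ i ∈ S.erase j, (f i).linear (v j) = 0)
    {X : Fin k → ℝ} (hX : ∀ j ∈ S, f j X = 0) (x : Fin k → ℝ) :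
    f0 x = f0 X + ∑ j ∈ S, ((f j).linear (v j))⁻¹ * f j x := by
  have hlx : ∀ j ∈ S, (f j).linear (x - X) = f j x := by
    intro j hj
    have := aff_add (f j) X (x - X)
    rw [hX j hj, zero_add, add_sub_cancel] at this
    exact this.symm
  have hne : ∀ j ∈ S, (f j).linear (v j) ≠ 0 := fun j hj =>
    dir_ne hf hk (by rw [Finset.card_erase_of_mem hj, hS]) (hv0 j hj) (hv j hj)
      (Finset.notMem_erase j S)
  have key : (x - X) - ∑ j ∈ S, (((f j).linear (v j))⁻¹ * f j x) • v j = 0 := by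
    refine lin_inj hf hS fun i hi => ?_
    rw [map_sub, map_sum, hlx i hi, Finset.sum_eq_single i]
    · rw [map_smul, smul_eq_mul]
      have := hne i hi
      field_simp
      ring
    · intro j hj hji
      rw [map_smul, hv j hj i (Finset.mem_erase.2 ⟨hji.symm, hi⟩), smul_zero]
    · exact fun h => absurd hi h
  have h2 := congrArg f0 key
  rw [map_sub, map_sub, map_sum, map_zero] at h2
  have h3 : ∑ j ∈ S, f0 ((((f j).linear (v j))⁻¹ * f j x) • v j) =
      ∑ j ∈ S, ((f j).linear (v j))⁻¹ * f j x :=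
    Finset.sum_congr rfl fun j hj => by rw [map_smul, hv0 j hj, smul_eq_mul, mul_one]
  linarith

theorem det_same_image (f : Fin N → ((Fin k → ℝ) →ᵃ[ℝ] ℝ)) {σ τ : Fin k → Fin N}
    (hτ : Function.Injective τ)
    (h : ∀ i, ∃ i', σ i' = τ i) : |(LMat f τ).det| = |(LMat f σ).det| := by
  choose q hq using h
  have hinj : Function.Injective q := fun a b hab => hτ (by rw [← hq, ← hq, hab])
  let e : Equiv.Perm (Fin k) := Equiv.ofBijective q (Finite.injective_iff_bijective.1 hinj)
  have : LMat f τ = (LMat f σ).submatrix e id := by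
    ext i c
    simp [LMat, e, hq]
  rw [this, Matrix.det_permute, abs_mul]
  rcases Int.units_eq_one_or (Equiv.Perm.sign e) with h | h <;> simp [h]

/-- canonical enumeration -/
def enum (S : {S : Finset (Fin N) // S.card = k}) : Fin k → Fin N :=
  fun i => ((S.1.orderIsoOfFin S.2 i : S.1) : Fin N)

theorem enum_inj (S : {S : Finset (Fin N) // S.card = k}) : Function.Injective (enum S) :=
  fun a b h => by simpa [enum, Subtype.ext_iff] using h

theorem enum_mem (S : {S : Finset (Fin N) // S.card = k}) (i : Fin k) : enum S i ∈ S.1 :=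
  (S.1.orderIsoOfFin S.2 i).2

theorem enum_surj (S : {S : Finset (Fin N) // S.card = k}) {j : Fin N} (hj : j ∈ S.1) :
    ∃ i, enum S i = j :=
  ⟨(S.1.orderIsoOfFin S.2).symm ⟨j, hj⟩, by simp [enum]⟩

theorem det_ratio {f : Fin N → ((Fin k → ℝ) →ᵃ[ℝ] ℝ)} 
    {S T : {S : Finset (Fin N) // S.card = k}} {j r : Fin N} (hj : j ∈ S.1)
    (hT : T.1 = insert r (S.1.erase j)) {v : Fin k → ℝ} (hv0 : v ≠ 0)
    (hv : ∀ i ∈ S.1.erase j, (f i).linear v = 0) (hvj : (f j).linear v ≠ 0) :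
    |(LMat f (enum T)).det| * |(f j).linear v| = |(LMat f (enum S)).det| * |(f r).linear v| := by
  obtain ⟨a, ha⟩ := enum_surj S hj
  have h1 : |(LMat f (enum T)).det| = |(LMat f (Function.update (enum S) a r)).det| := by
    refine det_same_image f (enum_inj T) fun i => ?_
    have := enum_mem T i
    rw [hT, Finset.mem_insert, Finset.mem_erase] at this
    rcases this with h | ⟨h, h'⟩
    · exact ⟨a, by simp [h]⟩
    · obtain ⟨b, hb⟩ := enum_surj S h'
      refine ⟨b, ?_⟩
      rw [Function.update_of_ne, hb]
      rintro rfl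
      exact h (hb.symm.trans ha)
  set M := LMat f (enum S) with hM
  set ρ : Fin k → ℝ := fun c => (f r).linear (Pi.single c 1) with hρ
  have h2 : LMat f (Function.update (enum S) a r) = M.updateRow a ρ := by
    ext i c
    by_cases hi : i = a
    · subst hi; simp [LMat, hρ]
    · simp [LMat, hi, hM, Matrix.updateRow_ne]
  set c : ℝ := (f r).linear v / (f j).linear v with hc
  have h3 : (M.updateRow a (ρ + (-c) • M a)).det = 0 := by
    refine Matrix.exists_mulVec_eq_zero_iff.1 ⟨v, hv0, ?_⟩
    ext i
    have hMv : ∀ i, M i ⬝ᵥ v = (f (enum S i)).linear v := fun i => LMat_mulVec f (enum S) v i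
    have hρv : ρ ⬝ᵥ v = (f r).linear v := by rw [lin_expand]; rfl
    by_cases hi : i = a
    · subst hi
      simp only [Matrix.mulVec, Matrix.updateRow_self, add_dotProduct, smul_dotProduct, hMv, hρv, ha,
        Pi.zero_apply, smul_eq_mul, hc]
      field_simp
      ring
    · simp only [Matrix.mulVec, Matrix.updateRow_ne hi, hMv, Pi.zero_apply]
      exact hv _ (Finset.mem_erase.2 ⟨fun h => hi (enum_inj S (h.trans ha.symm)), enum_mem S i⟩)
  rw [Matrix.det_updateRow_add, Matrix.det_updateRow_smul, Matrix.updateRow_eq_self] at h3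
  have h4 : (M.updateRow a ρ).det = c * M.det := by linarith
  rw [h1, h2, h4, abs_mul, hc, abs_div]
  have : |(f j).linear v| ≠ 0 := abs_ne_zero.2 hvj
  field_simp

theorem sum_reindex (S : {S : Finset (Fin N) // S.card = k}) (hk : 1 ≤ k)
    (g : {S : Finset (Fin N) // S.card = k} → ℂ) (c : Fin N → Fin N → ℂ)
    (hz : ∀ T, S ≠ T → (S.1 ∩ T.1).card < k - 1 → g T = 0)
    (hd : g S = ∑ j ∈ S.1, c j j)
    (ho : ∀ T : {S : Finset (Fin N) // S.card = k}, ∀ j r : Fin N, j ∈ S.1 → r ∉ S.1 →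
      T.1 = insert r (S.1.erase j) → g T = c j r) :
    ∑ T, g T = ∑ j ∈ S.1, ∑ r ∈ (S.1.erase j)ᶜ, c j r := by
  have e1 : ∀ j ∈ S.1, ∑ r ∈ (S.1.erase j)ᶜ, c j r = c j j + ∑ r ∈ S.1ᶜ, c j r := by
    intro j hj
    rw [Finset.compl_erase, Finset.sum_insert (by simpa using hj)]
  rw [Finset.sum_congr rfl e1, Finset.sum_add_distrib, ← hd,
    ← Finset.add_sum_erase _ _ (Finset.mem_univ S)]
  congr 1
  rw [← Finset.sum_product']
  symm
  have hcard : ∀ p ∈ S.1 ×ˢ S.1ᶜ, (insert p.2 (S.1.erase p.1)).card = k := by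
    intro p hp
    rw [Finset.mem_product, Finset.mem_compl] at hp
    rw [Finset.card_insert_of_notMem (fun h => hp.2 (Finset.mem_of_mem_erase h)),
      Finset.card_erase_of_mem hp.1, S.2]
    omega
  refine Finset.sum_bij_ne_zero (fun p hp _ => ⟨insert p.2 (S.1.erase p.1), hcard p hp⟩) ?_ ?_ ?_ ?_
  · intro p hp _
    rw [Finset.mem_product, Finset.mem_compl] at hp
    refine Finset.mem_erase.2 ⟨fun h => hp.2 ?_, Finset.mem_univ _⟩
    rw [← h]
    exact Finset.mem_insert_self _ _
  · rintro ⟨j, r⟩ hp _ ⟨j', r'⟩ hp' _ h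
    rw [Finset.mem_product, Finset.mem_compl] at hp hp'
    simp only [Subtype.mk.injEq] at h
    simp only at hp hp'
    have h1 : r = r' := by
      have : r ∈ insert r' (S.1.erase j') := h ▸ Finset.mem_insert_self _ _
      rcases Finset.mem_insert.1 this with h | h
      · exact h
      · exact absurd (Finset.mem_of_mem_erase h) hp.2
    have h2 : j = j' := by
      by_contra hne
      have : j ∈ insert r' (S.1.erase j') :=
        Finset.mem_insert_of_mem (Finset.mem_erase.2 ⟨hne, hp.1⟩)
      rw [← h] at this
      rcases Finset.mem_insert.1 this with h | h
      · exact hp.2 (h ▸ hp.1)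
      · exact Finset.notMem_erase _ _ h
    rw [h1, h2]
  · intro T hT hgT
    have hne : S ≠ T := fun h => Finset.notMem_erase T Finset.univ (by rw [h] at hT; exact hT)
    have hge : k - 1 ≤ (S.1 ∩ T.1).card := by
      by_contra hc
      exact hgT (hz T hne (by omega))
    have hlt : (S.1 ∩ T.1).card < k := by
      by_contra hc
      have h1 : S.1 ∩ T.1 = S.1 :=
        Finset.eq_of_subset_of_card_le Finset.inter_subset_left (by rw [S.2]; omega)
      have h2 : S.1 ∩ T.1 = T.1 :=
        Finset.eq_of_subset_of_card_le Finset.inter_subset_right (by rw [T.2]; omega)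
      exact hne (Subtype.ext (h1.symm.trans h2))
    have c1 : (S.1 \ T.1).card = 1 := by
      have := Finset.card_sdiff_add_card_inter S.1 T.1
      rw [S.2] at this; omega
    have c2 : (T.1 \ S.1).card = 1 := by
      have := Finset.card_sdiff_add_card_inter T.1 S.1
      rw [T.2, Finset.inter_comm] at this; omega
    obtain ⟨j, hj⟩ := Finset.card_eq_one.1 c1
    obtain ⟨r, hr⟩ := Finset.card_eq_one.1 c2
    have mj : ∀ i, (i ∈ S.1 ∧ i ∉ T.1) ↔ i = j := fun i => by
      rw [← Finset.mem_sdiff, hj, Finset.mem_singleton]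
    have mr : ∀ i, (i ∈ T.1 ∧ i ∉ S.1) ↔ i = r := fun i => by
      rw [← Finset.mem_sdiff, hr, Finset.mem_singleton]
    have hTe : T.1 = insert r (S.1.erase j) := by
      ext i
      have := mj i
      have := mr i
      rw [Finset.mem_insert, Finset.mem_erase]
      tauto
    have hjS := ((mj j).2 rfl).1
    have hrS := ((mr r).2 rfl).2
    refine ⟨(j, r), Finset.mem_product.2 ⟨hjS, Finset.mem_compl.2 hrS⟩, ?_, Subtype.ext hTe.symm⟩
    rw [← ho T j r hjS hrS hTe]
    exact hgT
  · rintro ⟨j, r⟩ hp _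
    have hp' := hp
    rw [Finset.mem_product, Finset.mem_compl] at hp'
    exact (ho _ j r hp'.1 hp'.2 rfl).symm

/-- splitting of the derivative integral -/
theorem deriv_split {f : Fin N → ((Fin k → ℝ) →ᵃ[ℝ] ℝ)} (hk : 1 ≤ k) (hkN : k ≤ N)
    (hf : Generic f)
    {f0 : (Fin k → ℝ) →ₗ[ℝ] ℝ} (hf0 : GenericLin f f0) {x0 : Fin k → ℝ} (hx0 : x0 ∈ HypCompl f)
    (hb : BddBelow (f0 '' Reg f x0)) {α : Fin N → ℝ} (hα : ∀ j, 0 < α j)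
    {S : Finset (Fin N)} (hS : S.card = k) {lam : ℂ} (hl : 0 < lam.re)
    {v : Fin N → Fin k → ℝ}
    (hv0 : ∀ j ∈ S, f0 (v j) = 1) (hv : ∀ j ∈ S, ∀ i ∈ S.erase j, (f i).linear (v j) = 0)
    {X : Fin k → ℝ} (hX : ∀ j ∈ S, f j X = 0) :
    ∫ x in Reg f x0, -(f0 x : ℂ) * Jf f f0 α lam S x =
      -((f0 X : ℂ) * ∫ x in Reg f x0, Jf f f0 α lam S x) -
      ∑ j ∈ S, (((f j).linear (v j) : ℝ) : ℂ)⁻¹ *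
        ∫ x in Reg f x0, Jf f f0 α lam (S.erase j) x := by
  have h1 : ∫ x in Reg f x0, -(f0 x : ℂ) * Jf f f0 α lam S x =
      ∫ x in Reg f x0, (-(f0 X : ℂ) * Jf f f0 α lam S x -
        ∑ j ∈ S, (((f j).linear (v j) : ℝ) : ℂ)⁻¹ * Jf f f0 α lam (S.erase j) x) := by
    refine setIntegral_congr_fun (Reg_open f x0).measurableSet fun x hx => ?_
    have h2 : ∑ j ∈ S, (((f j).linear (v j) : ℝ) : ℂ)⁻¹ * Jf f f0 α lam (S.erase j) x =
        (∑ j ∈ S, (((f j).linear (v j) : ℝ) : ℂ)⁻¹ * (f j x : ℂ)) * Jf f f0 α lam S x := by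
      rw [Finset.sum_mul]
      refine Finset.sum_congr rfl fun j hj => ?_
      rw [← Jf_erase hx α hj lam]
      ring
    rw [h2, f0_expand hf hk hS hv0 hv hX x]
    push_cast
    ring
  rw [h1, integral_sub, integral_const_mul, integral_finsetSum]
  · simp_rw [integral_const_mul]
    ring
  · exact fun j hj => (Jf_erase_int hk hkN hf hf0 hx0 hb hα hS hl hj).const_mul _
  · exact (Jf_int hk hkN hf hf0 hx0 hb hα hS hl).const_mul _
  · exact integrable_finsetSum _ fun j hj =>
      (Jf_erase_int hk hkN hf hf0 hx0 hb hα hS hl hj).const_mul _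

theorem sign_det {a b D E : ℝ} (ha : a ≠ 0) (hb : b ≠ 0) (h : E * |a| = D * |b|) :
    Real.sign (a * b) * E = D * a⁻¹ * b := by
  rcases lt_or_gt_of_ne ha with ha' | ha' <;> rcases lt_or_gt_of_ne hb with hb' | hb'
  · rw [Real.sign_of_pos (mul_pos_of_neg_of_neg ha' hb')]
    rw [abs_of_neg ha', abs_of_neg hb'] at h
    field_simp; linarith
  · rw [Real.sign_of_neg (mul_neg_of_neg_of_pos ha' hb')]
    rw [abs_of_neg ha', abs_of_pos hb'] at h
    field_simp; linarith
  · rw [Real.sign_of_neg (mul_neg_of_pos_of_neg ha' hb')]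
    rw [abs_of_pos ha', abs_of_neg hb'] at h
    field_simp; linarith
  · rw [Real.sign_of_pos (mul_pos ha' hb')]
    rw [abs_of_pos ha', abs_of_pos hb'] at h
    field_simp; linarith

/-- for every `Δ ∈ 𝒟⁺` each component `λ ↦ I_{Δ,X}(λ)` is holomorphic on
`{Re λ > 0}` and the vector `(I_{Δ,X})_{X ∈ 𝒳}` satisfies the ODE
`I' = -(𝒜 + λ⁻¹ ℬ) I` with `𝒜` diagonal with entries `f0 X` and `ℬ` as described. -/
theorem stmt_3 {k N : ℕ} (hk : 1 ≤ k) (hkN : k ≤ N)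
    (f : Fin N → ((Fin k → ℝ) →ᵃ[ℝ] ℝ)) (hf : Generic f)
    (f0 : (Fin k → ℝ) →ₗ[ℝ] ℝ) (hf0 : GenericLin f f0)
    (α : Fin N → ℝ) (hα : ∀ j, 0 < α j)
    (pt : {S : Finset (Fin N) // S.card = k} → (Fin k → ℝ))
    (hpt : ∀ S : {S : Finset (Fin N) // S.card = k}, IsVertexOf f S.1 (pt S))
    (I : Set (Fin k → ℝ) → {S : Finset (Fin N) // S.card = k} → ℂ → ℂ)
    (hI : ∀ (Δ : Set (Fin k → ℝ)) (S : {S : Finset (Fin N) // S.card = k}) (lam : ℂ),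
      I Δ S lam = ∫ x in Δ, Complex.exp (-(lam * Complex.ofReal (f0 x))) *
        Complex.ofReal ((∏ j, |f j x| ^ α j) *
          |(Matrix.of fun i c : Fin k =>
            (f ((S.1.orderIsoOfFin S.2 i : S.1) : Fin N)).linear
              (Pi.single c 1)).det| *
          (∏ j ∈ S.1, f j x)⁻¹))
    (A B : {S : Finset (Fin N) // S.card = k} →
      {S : Finset (Fin N) // S.card = k} → ℝ)
    (hAdiag : ∀ S : {S : Finset (Fin N) // S.card = k}, A S S = f0 (pt S))
    (hAoff : ∀ S T : {S : Finset (Fin N) // S.card = k}, S ≠ T → A S T = 0)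
    (hBdiag : ∀ S : {S : Finset (Fin N) // S.card = k}, B S S = ∑ j ∈ S.1, α j)
    (hBzero : ∀ S T : {S : Finset (Fin N) // S.card = k}, S ≠ T →
      (S.1 ∩ T.1).card < k - 1 → B S T = 0)
    (hBoff : ∀ S T : {S : Finset (Fin N) // S.card = k}, ∀ j r : Fin N,
      (S.1 ∩ T.1).card = k - 1 → S.1 \ T.1 = {j} → T.1 \ S.1 = {r} →
      ∀ e : Fin k → ℝ, (∀ i ∈ S.1 ∩ T.1, (f i).linear e = 0) → f0 e = 1 →
      B S T = Real.sign ((f j).linear e * (f r).linear e) * α r) :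
    ∀ Δ : Set (Fin k → ℝ), MemDplus f f0 Δ →
      (∀ S : {S : Finset (Fin N) // S.card = k},
        DifferentiableOn ℂ (I Δ S) {lam : ℂ | 0 < lam.re}) ∧
      (∀ S : {S : Finset (Fin N) // S.card = k}, ∀ lam : ℂ, 0 < lam.re →
        HasDerivAt (I Δ S)
          (-(∑ T : {S : Finset (Fin N) // S.card = k},
            (Complex.ofReal (A S T) + lam⁻¹ * Complex.ofReal (B S T)) * I Δ T lam))
          lam) := by
  intro Δ hΔ
  obtain ⟨hdom, hb⟩ := hΔ
  obtain ⟨x0, hx0, rfl⟩ := domain_eq hdom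
  suffices H : ∀ S : {S : Finset (Fin N) // S.card = k}, ∀ lam : ℂ, 0 < lam.re →
        HasDerivAt (I (Reg f x0) S)
          (-(∑ T : {S : Finset (Fin N) // S.card = k},
            (Complex.ofReal (A S T) + lam⁻¹ * Complex.ofReal (B S T)) * I (Reg f x0) T lam))
          lam from
    ⟨fun S lam hl => (H S lam hl).differentiableAt.differentiableWithinAt, H⟩
  intro S lam hl
  have hlam : lam ≠ 0 := by
    rintro rfl
    simp at hl
  have hIJ : ∀ T, I (Reg f x0) T = fun l : ℂ => ((|(LMat f (enum T)).det| : ℝ) : ℂ) *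
      ∫ x in Reg f x0, Jf f f0 α l T.1 x := by
    intro T
    funext l
    rw [hI, ← integral_const_mul]
    congr 1
    funext x
    change _ * Complex.ofReal (_ * |(LMat f (enum T)).det| * _) = _
    unfold Jf Wt
    push_cast
    ring
  -- directions
  have hex : ∀ j, ∃ v : Fin k → ℝ, j ∈ S.1 → f0 v = 1 ∧ ∀ i ∈ S.1.erase j, (f i).linear v = 0 := by
    intro j
    by_cases hj : j ∈ S.1
    · obtain ⟨v, hv⟩ := exists_dir hf0 (U := S.1.erase j)
        (by rw [Finset.card_erase_of_mem hj, S.2])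
      exact ⟨v, fun _ => hv⟩
    · exact ⟨0, fun h => absurd h hj⟩
  choose v hv using hex
  have hcU : ∀ j ∈ S.1, (S.1.erase j).card = k - 1 := fun j hj => by
    rw [Finset.card_erase_of_mem hj, S.2]
  have hne : ∀ j ∈ S.1, ∀ r, r ∉ S.1.erase j → (f r).linear (v j) ≠ 0 := fun j hj r hr =>
    dir_ne hf hk (hcU j hj) (hv j hj).1 (hv j hj).2 hr
  have hder := (Jf_hasDeriv hk hkN hf hf0 hx0 hb hα S.2 hl).const_mul
    ((|(LMat f (enum S)).det| : ℝ) : ℂ)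
  rw [hIJ S]
  refine hder.congr_deriv ?_
  rw [deriv_split hk hkN hf hf0 hx0 hb hα S.2 hl (fun j hj => (hv j hj).1)
    (fun j hj => (hv j hj).2) (hpt S).2]
  set J : Finset (Fin N) → ℂ := fun T => ∫ x in Reg f x0, Jf f f0 α lam T x with hJ
  set D : {S : Finset (Fin N) // S.card = k} → ℝ := fun T => |(LMat f (enum T)).det| with hD
  have hIT : ∀ T, I (Reg f x0) T lam = (D T : ℂ) * J T.1 := fun T => by rw [hIJ T]
  have hibp : ∀ j ∈ S.1, lam * J (S.1.erase j) = ∑ r ∈ (S.1.erase j)ᶜ,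
      (((α r * (f r).linear (v j) : ℝ) : ℂ) * J (insert r (S.1.erase j))) := by
    intro j hj
    refine ibp hf hk hx0 hα (hcU j hj) (hv j hj).1 (hv j hj).2
      (Jf_erase_int hk hkN hf hf0 hx0 hb hα S.2 hl hj) fun r hr => ?_
    refine Jf_int hk hkN hf hf0 hx0 hb hα ?_ hl
    rw [Finset.card_insert_of_notMem hr, hcU j hj]
    omega
  have hA : ∑ T, (A S T : ℂ) * I (Reg f x0) T lam = (f0 (pt S) : ℂ) * ((D S : ℂ) * J S.1) := by
    rw [Finset.sum_eq_single S]
    · rw [hAdiag, hIT]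
    · intro T _ hT
      rw [hAoff S T hT.symm]
      simp
    · exact fun h => absurd (Finset.mem_univ _) h
  have hB : ∑ T, (B S T : ℂ) * I (Reg f x0) T lam =
      ∑ j ∈ S.1, ∑ r ∈ (S.1.erase j)ᶜ, (D S : ℂ) * (((f j).linear (v j) : ℝ) : ℂ)⁻¹ *
        (((α r * (f r).linear (v j) : ℝ) : ℂ) * J (insert r (S.1.erase j))) := by
    refine sum_reindex S hk _ (fun j r => (D S : ℂ) * (((f j).linear (v j) : ℝ) : ℂ)⁻¹ *
        (((α r * (f r).linear (v j) : ℝ) : ℂ) * J (insert r (S.1.erase j)))) ?_ ?_ ?_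
    · intro T hT hc
      rw [hBzero S T hT hc]
      simp
    · rw [hBdiag, hIT]
      push_cast
      rw [Finset.sum_mul]
      refine Finset.sum_congr rfl fun j hj => ?_
      rw [Finset.insert_erase hj]
      have : (((f j).linear (v j) : ℝ) : ℂ) ≠ 0 :=
        Complex.ofReal_ne_zero.2 (hne j hj j (Finset.notMem_erase _ _))
      field_simp
    · intro T j r hj hr hT
      have hrj : r ≠ j := fun h => hr (h ▸ hj)
      have hi : S.1 ∩ T.1 = S.1.erase j := by
        ext i
        rw [hT, Finset.mem_inter, Finset.mem_insert, Finset.mem_erase]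
        constructor
        · rintro ⟨h1, rfl | h2⟩
          · exact absurd h1 hr
          · exact h2
        · exact fun h => ⟨h.2, Or.inr h⟩
      have hs1 : S.1 \ T.1 = {j} := by
        ext i
        rw [hT, Finset.mem_sdiff, Finset.mem_insert, Finset.mem_erase, Finset.mem_singleton]
        constructor
        · rintro ⟨h1, h2⟩
          by_contra h3
          exact h2 (Or.inr ⟨h3, h1⟩)
        · rintro rfl
          exact ⟨hj, by rintro (h | h); exacts [hrj h.symm, h.1 rfl]⟩
      have hs2 : T.1 \ S.1 = {r} := by
        ext i
        rw [hT, Finset.mem_sdiff, Finset.mem_insert, Finset.mem_erase, Finset.mem_singleton]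
        constructor
        · rintro ⟨h1 | h1, h2⟩
          · exact h1
          · exact absurd h1.2 h2
        · rintro rfl
          exact ⟨Or.inl rfl, hr⟩
      have hBe := hBoff S T j r (by rw [hi, hcU j hj]) hs1 hs2 (v j)
        (by rw [hi]; exact (hv j hj).2) (hv j hj).1
      have hlj := hne j hj j (Finset.notMem_erase _ _)
      have hlr := hne j hj r fun h => hr (Finset.mem_of_mem_erase h)
      have hvne : v j ≠ 0 := by
        intro h
        rw [h, map_zero] at hlj
        exact hlj rfl
      have hdr := sign_det hlj hlr (det_ratio hj hT hvne (hv j hj).2 hlj)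
      have hreal : B S T * D T =
          D S * ((f j).linear (v j))⁻¹ * (α r * (f r).linear (v j)) := by
        rw [hBe]
        linear_combination α r * hdr
      rw [hIT, ← hT, ← mul_assoc, ← mul_assoc]
      congr 1
      exact_mod_cast hreal
  have hC : ∑ T, (B S T : ℂ) * I (Reg f x0) T lam =
      lam * ((D S : ℂ) * ∑ j ∈ S.1, (((f j).linear (v j) : ℝ) : ℂ)⁻¹ * J (S.1.erase j)) := by
    rw [hB, Finset.mul_sum, Finset.mul_sum]
    refine Finset.sum_congr rfl fun j hj => ?_
    rw [← Finset.mul_sum, ← hibp j hj]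
    ring
  have hsum : ∑ T, (Complex.ofReal (A S T) + lam⁻¹ * Complex.ofReal (B S T)) * I (Reg f x0) T lam =
      ∑ T, (A S T : ℂ) * I (Reg f x0) T lam +
        lam⁻¹ * ∑ T, (B S T : ℂ) * I (Reg f x0) T lam := by
    rw [Finset.mul_sum, ← Finset.sum_add_distrib]
    exact Finset.sum_congr rfl fun T _ => by ring
  rw [hsum, hA, hC, inv_mul_cancel_left₀ hlam]
  ring

end HypArr
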